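/- Let L ⊆ ℝ^n be a star set of finite Lebesgue measure (L need not be bounded). Then ∫_{S^{n-1}} ( V_{n-1}(L ∩ w^⊥) )^{n} d*w ≤ ( b_{n-1}^{n} / b_n^{n−1} ) · ( V_n(L) )^{n−1}. (This is the case k = n−1 of the Busemann intersection inequality ∫_{G_{n,k}} [V_k(L ∩ τ₀)]^n d*τ₀ ≤ (b_k^n/b_n^k)[V_n(L)]^k, which the paper derives, for arbitrary measurable star sets of finite measure, from the sharp L^p–L^q estimate for the k-plane transform.) -/

import Mathlib

open MeasureTheory Metric Real
open scoped ENNReal NNReal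

noncomputable section

/-- The normalized (probability) surface measure `d*θ` on the unit sphere of
`EuclideanSpace ℝ (Fin n)`. -/
def sphMeasure (n : ℕ) : Measure (sphere (0 : EuclideanSpace ℝ (Fin n)) 1) :=
  ((volume : Measure (EuclideanSpace ℝ (Fin n))).toSphere Set.univ)⁻¹ •
    (volume : Measure (EuclideanSpace ℝ (Fin n))).toSphere

/-- The hyperplane Radon transform: `Rf(θ,t) = ∫_{θ^⊥} f(tθ + y) dy`, where `θ^⊥` carries its
canonical Lebesgue measure as an (n-1)-dimensional inner product space. -/
def Radon (n : ℕ) (f : EuclideanSpace ℝ (Fin n) → ℝ≥0∞)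
    (θ : sphere (0 : EuclideanSpace ℝ (Fin n)) 1) (t : ℝ) : ℝ≥0∞ :=
  ∫⁻ y : ((ℝ ∙ (θ : EuclideanSpace ℝ (Fin n)))ᗮ),
    f (t • (θ : EuclideanSpace ℝ (Fin n)) + (y : EuclideanSpace ℝ (Fin n)))

/-- `b_m = π^{m/2}/Γ(m/2+1)`, the volume of the m-dimensional unit ball. -/
def ballVol (m : ℕ) : ℝ := Real.pi ^ ((m : ℝ) / 2) / Real.Gamma ((m : ℝ) / 2 + 1)


-- Part 1
/-- The centered distribution function of a subset of the line. -/
noncomputable def cdfc (K : Set ℝ) (t : ℝ) : ℝ :=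
  volume.real (K ∩ Set.Iic t) - volume.real K / 2

section oneD
variable {K : Set ℝ} {R : ℝ}

lemma cdfc_mono (hf : volume K ≠ ⊤) : Monotone (cdfc K) := by
  intro s t h
  unfold cdfc
  have : volume.real (K ∩ Set.Iic s) ≤ volume.real (K ∩ Set.Iic t) :=
    measureReal_mono (Set.inter_subset_inter_right _ (Set.Iic_subset_Iic.2 h))
      (measure_ne_top_of_subset Set.inter_subset_left hf)
  linarith

lemma cdfc_sub_le (hf : volume K ≠ ⊤) {s t : ℝ} (h : s ≤ t) : cdfc K t - cdfc K s ≤ t - s := by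
  unfold cdfc
  have h1 : volume.real (K ∩ Set.Iic t) ≤ volume.real ((K ∩ Set.Iic s) ∪ Set.Ioc s t) := by
    apply measureReal_mono
    · rintro x ⟨hx, hxt⟩
      by_cases hs : x ≤ s
      · exact Or.inl ⟨hx, hs⟩
      · exact Or.inr ⟨lt_of_not_ge hs, hxt⟩
    · exact ne_of_lt (measure_union_lt_top (lt_of_le_of_lt (measure_mono Set.inter_subset_left) hf.lt_top)
        (by simp))
  have h2 := measureReal_union_le (μ := volume) (K ∩ Set.Iic s) (Set.Ioc s t)
  have h3 : volume.real (Set.Ioc s t) = t - s := by simp [measureReal_def, h]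
  linarith

lemma cdfc_cont (hf : volume K ≠ ⊤) : Continuous (cdfc K) := by
  have : LipschitzWith 1 (cdfc K) := by
    apply LipschitzWith.of_le_add
    intro x y
    rcases le_total x y with h | h
    · have := cdfc_mono hf h
      have := dist_nonneg (x := x) (y := y)
      linarith
    · have := cdfc_sub_le hf h
      rw [Real.dist_eq, abs_of_nonneg (by linarith)]
      linarith
  exact this.continuous

lemma cdfc_left (hR : K ⊆ Set.Icc (-R) R) {t : ℝ} (ht : t < -R) : cdfc K t = - (volume.real K / 2) := by
  unfold cdfc
  have : K ∩ Set.Iic t = ∅ := by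
    ext x; simp only [Set.mem_inter_iff, Set.mem_Iic, Set.mem_empty_iff_false, iff_false, not_and]
    intro hx; have := (hR hx).1; linarith
  rw [this]; simp

lemma cdfc_right (hR : K ⊆ Set.Icc (-R) R) {t : ℝ} (ht : R ≤ t) : cdfc K t = volume.real K / 2 := by
  unfold cdfc
  have : K ∩ Set.Iic t = K := by
    apply Set.inter_eq_left.2
    intro x hx; have := (hR hx).2; exact this.trans ht
  rw [this]; ring

lemma cdfc_abs_le (hf : volume K ≠ ⊤) (t : ℝ) : |cdfc K t| ≤ volume.real K / 2 := by
  unfold cdfc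
  have : volume.real (K ∩ Set.Iic t) ≤ volume.real K := measureReal_mono Set.inter_subset_left hf
  have h0 := measureReal_nonneg (μ := volume) (s := K ∩ Set.Iic t)
  rw [abs_le]; constructor <;> linarith

/-- The symmetric interval with the same length. -/
def symI (K : Set ℝ) : Set ℝ := Set.Icc (-(volume.real K / 2)) (volume.real K / 2)

lemma vol_ne_top_of_bdd (hR : K ⊆ Set.Icc (-R) R) : volume K ≠ ⊤ :=
  measure_ne_top_of_subset hR (by simp)

lemma cdfc_map (hK : MeasurableSet K) (hR : K ⊆ Set.Icc (-R) R) :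
    MeasurePreserving (cdfc K) (volume.restrict K) (volume.restrict (symI K)) := by
  have hf := vol_ne_top_of_bdd hR
  have hc := cdfc_cont hf
  refine ⟨hc.measurable, ?_⟩
  haveI : IsFiniteMeasure (volume.restrict K) := ⟨by simpa using hf.lt_top⟩
  haveI : IsFiniteMeasure (volume.restrict (symI K)) := ⟨by simp [symI]⟩
  haveI : IsFiniteMeasure ((volume.restrict K).map (cdfc K)) := by
    exact Measure.isFiniteMeasure_map _ _
  set l := volume.real K / 2 with hl
  have hl0 : 0 ≤ l := by positivity
  have hKl : volume K = ENNReal.ofReal (2 * l) := by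
    rw [hl, mul_div_cancel₀ _ two_ne_zero, ofReal_measureReal hf]
  refine Measure.ext_of_Iic _ _ fun s => ?_
  rw [Measure.map_apply hc.measurable measurableSet_Iic,
    Measure.restrict_apply (hc.measurable measurableSet_Iic),
    Measure.restrict_apply measurableSet_Iic]
  rcases lt_or_ge s (-l) with h1 | h1
  · have e1 : cdfc K ⁻¹' Set.Iic s = ∅ := by
      ext x
      simp only [Set.mem_preimage, Set.mem_Iic, Set.mem_empty_iff_false, iff_false, not_le]
      have := (abs_le.1 (cdfc_abs_le hf x)).1
      linarith
    have e2 : Set.Iic s ∩ symI K = ∅ := by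
      ext x
      simp only [symI, Set.mem_inter_iff, Set.mem_Iic, Set.mem_Icc, Set.mem_empty_iff_false, iff_false]
      rintro ⟨h, h', -⟩
      linarith
    rw [e1, e2]; simp
  rcases le_or_gt l s with h2 | h2
  · have e1 : cdfc K ⁻¹' Set.Iic s = Set.univ := by
      ext x
      simp only [Set.mem_preimage, Set.mem_Iic, Set.mem_univ, iff_true]
      have := (abs_le.1 (cdfc_abs_le hf x)).2
      linarith
    have e2 : Set.Iic s ∩ symI K = symI K := by
      apply Set.inter_eq_right.2
      intro x hx; exact hx.2.trans h2
    rw [e1, e2, Set.univ_inter, hKl, symI, Real.volume_Icc]; congr 1; ring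
  -- middle case
  have e2 : Set.Iic s ∩ symI K = Set.Icc (-l) s := by
    ext x
    simp only [symI, Set.mem_inter_iff, Set.mem_Iic, Set.mem_Icc, ← hl]
    constructor
    · rintro ⟨h, h', -⟩; exact ⟨h', h⟩
    · rintro ⟨h, h'⟩; exact ⟨h', h, by linarith⟩
  rw [e2, Real.volume_Icc]
  set A := cdfc K ⁻¹' Set.Iic s with hA
  have hAne : A.Nonempty := ⟨-R - 1, by
    simp only [hA, Set.mem_preimage, Set.mem_Iic]; rw [cdfc_left hR (by linarith)]; exact h1⟩
  have hAb : BddAbove A := ⟨R, fun x hx => by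
    by_contra hxx
    have : cdfc K x = l := cdfc_right hR (le_of_lt (not_le.1 hxx))
    simp only [hA, Set.mem_preimage, Set.mem_Iic] at hx
    linarith⟩
  have hAc : IsClosed A := isClosed_Iic.preimage hc
  set b := sSup A
  have hb : b ∈ A := hAc.csSup_mem hAne hAb
  have hAeq : A = Set.Iic b := by
    ext x; constructor
    · intro hx; exact le_csSup hAb hx
    · intro hx; exact (cdfc_mono hf hx).trans hb
  have hbs : cdfc K b = s := by
    apply le_antisymm hb
    -- intermediate value
    obtain ⟨z, hz⟩ : s ∈ Set.range (cdfc K) := by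
      apply mem_range_of_exists_le_of_exists_ge hc
      · exact ⟨b, hb⟩
      · exact ⟨R, by rw [cdfc_right hR le_rfl]; exact h2.le⟩
    have hzA : z ∈ A := by simp [hA, hz]
    rw [← hz]
    exact cdfc_mono hf (le_csSup hAb hzA)
  rw [hAeq, Set.inter_comm, ← ofReal_measureReal (measure_ne_top_of_subset Set.inter_subset_left hf)]
  congr 1
  unfold cdfc at hbs
  linarith

lemma cdfc_exists_zero (hR : K ⊆ Set.Icc (-R) R) : ∃ a, cdfc K a = 0 := by
  have hf := vol_ne_top_of_bdd hR
  apply mem_range_of_exists_le_of_exists_ge (cdfc_cont hf)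
  · exact ⟨-R-1, by rw [cdfc_left hR (by linarith)]; have := measureReal_nonneg (μ := volume) (s := K); linarith⟩
  · exact ⟨R, by rw [cdfc_right hR le_rfl]; positivity⟩

lemma neg_mp (K : Set ℝ) : MeasurePreserving (fun t : ℝ => -t) (volume.restrict (symI K)) (volume.restrict (symI K)) := by
  have h := (Measure.measurePreserving_neg (volume : Measure ℝ)).restrict_preimage (s := symI K) measurableSet_Icc
  have : (Neg.neg ⁻¹' symI K : Set ℝ) = symI K := by
    ext x; simp only [symI, Set.mem_preimage, Set.mem_Icc]
    constructor <;> rintro ⟨h1, h2⟩ <;> constructor <;> linarith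
  rw [this] at h
  exact h

end oneD

lemma abs_ge_sign (a b : ℝ) : |a| + Real.sign a * b ≤ |a + b| := by
  rcases lt_trichotomy a 0 with h | h | h
  · rw [Real.sign_of_neg h, abs_of_neg h]; have := neg_abs_le (a+b); linarith
  · subst h; simp
  · rw [Real.sign_of_pos h, abs_of_pos h]; have := le_abs_self (a+b); linarith

lemma sign_pair {x w d : ℝ} (h : 0 ≤ x * d) : 0 ≤ (Real.sign (x + w) + Real.sign (x - w)) * d := by
  have key : ∀ x w : ℝ, 0 ≤ x → 0 ≤ Real.sign (x + w) + Real.sign (x - w) := by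
    intro x w hx
    rcases lt_trichotomy (x + w) 0 with h1 | h1 | h1 <;> rcases lt_trichotomy (x - w) 0 with h2 | h2 | h2 <;>
      simp [Real.sign_of_neg, Real.sign_of_pos, h1, h2] <;> linarith
  rcases lt_trichotomy x 0 with hx | hx | hx
  · have hd : d ≤ 0 := by
      by_contra hd; have := mul_neg_of_neg_of_pos hx (not_le.1 hd); linarith
    have := key (-x) w (by linarith)
    have e1 : Real.sign (-x + w) = - Real.sign (x - w) := by rw [← Real.sign_neg]; congr 1; ring
    have e2 : Real.sign (-x - w) = - Real.sign (x + w) := by rw [← Real.sign_neg]; congr 1; ring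
    rw [e1, e2] at this
    apply mul_nonneg_of_nonpos_of_nonpos _ hd
    linarith
  · subst hx
    simp [Real.sign_neg]
  · have hd : 0 ≤ d := by
      by_contra hd; have := mul_neg_of_pos_of_neg hx (not_le.1 hd); linarith
    exact mul_nonneg (key x w hx.le) hd

lemma measurable_rsign : Measurable Real.sign := by
  unfold Real.sign
  exact Measurable.ite measurableSet_Iio measurable_const (Measurable.ite measurableSet_Ioi measurable_const measurable_const)

lemma abs_rsign_le (x : ℝ) : |Real.sign x| ≤ 1 := by
  rcases Real.sign_apply_eq x with h | h | h <;> simp [h]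

-- Part 2
lemma mp_integral {α β : Type*} [MeasurableSpace α] [MeasurableSpace β] {μ : Measure α} {ν : Measure β}
    {f : α → β} (h : MeasurePreserving f μ ν) {g : β → ℝ} (hg : Measurable g) :
    ∫ x, g (f x) ∂μ = ∫ y, g y ∂ν := by
  rw [← h.map_eq, integral_map h.measurable.aemeasurable hg.aestronglyMeasurable]

section
variable {ι : Type*} [Fintype ι] [DecidableEq ι]

lemma sign_int_zero (K : ι → Set ℝ) (hK : ∀ i, MeasurableSet (K i)) (R : ℝ)
    (hR : ∀ i, K i ⊆ Set.Icc (-R) R) (c : ι → ℝ) :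
    ∫ t, Real.sign (∑ i, c i * cdfc (K i) (t i)) ∂(Measure.pi fun i => volume.restrict (K i)) = 0 := by
  have hfK : ∀ i, IsFiniteMeasure (volume.restrict (K i)) := fun i =>
    ⟨by simpa using (vol_ne_top_of_bdd (hR i)).lt_top⟩
  have hfS : ∀ i, IsFiniteMeasure (volume.restrict (symI (K i))) := fun i => ⟨by simp [symI]⟩
  have h1 := measurePreserving_pi (fun i => volume.restrict (K i)) (fun i => volume.restrict (symI (K i)))
    (fun i => cdfc_map (hK i) (hR i))
  have h2 := measurePreserving_pi (fun i => volume.restrict (symI (K i))) (fun i => volume.restrict (symI (K i)))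
    (fun i => neg_mp (K i))
  have hm : Measurable (fun s : ι → ℝ => Real.sign (∑ i, c i * s i)) :=
    measurable_rsign.comp (by fun_prop)
  have e1 := mp_integral h1 hm
  have e2 := mp_integral h2 hm
  simp only [mul_neg, Finset.sum_neg_distrib, Real.sign_neg, integral_neg] at e2
  rw [e1]; linarith

lemma sign_int_nonneg (K : ι → Set ℝ) (hK : ∀ i, MeasurableSet (K i)) (R : ℝ)
    (hR : ∀ i, K i ⊆ Set.Icc (-R) R) (c : ι → ℝ) (i : ι) (D : ℝ → ℝ) (hD : Measurable D)
    (hDs : ∀ t, 0 ≤ cdfc (K i) t * D t) :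
    0 ≤ ∫ t, Real.sign (∑ i, c i * cdfc (K i) (t i)) * (c i * D (t i))
      ∂(Measure.pi fun i => volume.restrict (K i)) := by
  have hfK : ∀ i, IsFiniteMeasure (volume.restrict (K i)) := fun i =>
    ⟨by simpa using (vol_ne_top_of_bdd (hR i)).lt_top⟩
  have hfS : ∀ i, IsFiniteMeasure (volume.restrict (symI (K i))) := fun i => ⟨by simp [symI]⟩
  set ν : ι → Measure ℝ := fun j => if j = i then volume.restrict (K j) else volume.restrict (symI (K j)) with hν
  have hνf : ∀ j, IsFiniteMeasure (ν j) := by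
    intro j; simp only [hν]; split_ifs <;> infer_instance
  have h1 := measurePreserving_pi (fun i => volume.restrict (K i)) ν
    (f := fun j => if j = i then id else cdfc (K j))
    (fun j => by
      by_cases h : j = i
      · simp only [hν, h, if_true]; exact MeasurePreserving.id _
      · simp only [hν, h, if_false]; exact cdfc_map (hK j) (hR j))
  have h2 := measurePreserving_pi ν ν
    (f := fun j => if j = i then id else fun t => -t)
    (fun j => by
      by_cases h : j = i
      · simp only [hν, h, if_true]; exact MeasurePreserving.id _
      · simp only [hν, h, if_false]; exact neg_mp _)
  have hcm : Measurable (cdfc (K i)) := (cdfc_cont (vol_ne_top_of_bdd (hR i))).measurable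
  set G : (ι → ℝ) → ℝ := fun s => Real.sign (c i * cdfc (K i) (s i) + ∑ j ∈ Finset.univ.erase i, c j * s j)
    * (c i * D (s i)) with hG
  have hGm : Measurable G := by
    apply Measurable.mul
    · exact measurable_rsign.comp (by fun_prop)
    · fun_prop
  have e1 := mp_integral h1 hGm
  have e2 := mp_integral h2 hGm
  have l1 : ∀ t : ι → ℝ, G (fun j => (if j = i then id else cdfc (K j)) (t j)) =
      Real.sign (∑ i, c i * cdfc (K i) (t i)) * (c i * D (t i)) := by
    intro t
    simp only [hG, if_true, id]
    rw [← Finset.add_sum_erase _ _ (Finset.mem_univ i)]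
    congr 3
    apply Finset.sum_congr rfl
    intro j hj
    rw [if_neg (Finset.ne_of_mem_erase hj)]
  have l2 : ∀ t : ι → ℝ, G (fun j => (if j = i then id else fun t => -t) (t j)) =
      Real.sign (c i * cdfc (K i) (t i) - ∑ j ∈ Finset.univ.erase i, c j * t j) * (c i * D (t i)) := by
    intro t
    simp only [hG, if_true, id]
    rw [sub_eq_add_neg, ← Finset.sum_neg_distrib]
    congr 3
    apply Finset.sum_congr rfl
    intro j hj
    rw [if_neg (Finset.ne_of_mem_erase hj)]; ring
  simp_rw [l1] at e1
  rw [e1]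
  by_cases hGint : Integrable G (Measure.pi ν)
  · have hGint2 : Integrable (fun t : ι → ℝ => G (fun j => (if j = i then id else fun t => -t) (t j))) (Measure.pi ν) :=
      h2.integrable_comp_of_integrable hGint
    have : 0 ≤ ∫ t, (G t + G (fun j => (if j = i then id else fun t => -t) (t j))) ∂(Measure.pi ν) := by
      apply integral_nonneg
      intro t
      simp only [l2]
      simp only [hG, ← add_mul]
      apply sign_pair
      have := hDs (t i)
      nlinarith [mul_nonneg (mul_self_nonneg (c i)) this]
    rw [integral_add hGint hGint2, e2] at this
    linarith
  · rw [integral_undef hGint]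

theorem steiner_fiber (K : ι → Set ℝ) (hK : ∀ i, MeasurableSet (K i)) (R : ℝ)
    (hR : ∀ i, K i ⊆ Set.Icc (-R) R) (c : ι → ℝ) :
    ∫⁻ t in Set.univ.pi (fun i => symI (K i)), ENNReal.ofReal |∑ i, c i * t i| ≤
      ∫⁻ t in Set.univ.pi K, ENNReal.ofReal |∑ i, c i * t i| := by
  have hfK : ∀ i, IsFiniteMeasure (volume.restrict (K i)) := fun i =>
    ⟨by simpa using (vol_ne_top_of_bdd (hR i)).lt_top⟩
  have hfS : ∀ i, IsFiniteMeasure (volume.restrict (symI (K i))) := fun i => ⟨by simp [symI]⟩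
  have hf : ∀ i, volume (K i) ≠ ⊤ := fun i => vol_ne_top_of_bdd (hR i)
  have hc : ∀ i, Measurable (cdfc (K i)) := fun i => (cdfc_cont (hf i)).measurable
  rw [volume_pi, Measure.restrict_pi_pi, Measure.restrict_pi_pi]
  set μ := Measure.pi fun i => volume.restrict (K i) with hμ
  have h1 := measurePreserving_pi (fun i => volume.restrict (K i)) (fun i => volume.restrict (symI (K i)))
    (fun i => cdfc_map (hK i) (hR i))
  rw [← h1.lintegral_comp (by fun_prop)]
  have hae : ∀ i, ∀ᵐ t ∂μ, |t i| ≤ R := by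
    intro i
    have : ∀ᵐ t ∂μ, t ∈ Set.univ.pi K := by
      rw [hμ, ← Measure.restrict_pi_pi]
      exact ae_restrict_mem (MeasurableSet.univ_pi hK)
    filter_upwards [this] with t ht
    exact abs_le.2 (hR i (ht i (Set.mem_univ _)))
  have hti : ∀ i, Integrable (fun t : ι → ℝ => t i) μ := fun i =>
    Integrable.of_bound (measurable_pi_apply i).aestronglyMeasurable R (by simpa using hae i)
  have hFi : ∀ i, Integrable (fun t : ι → ℝ => cdfc (K i) (t i)) μ := fun i =>
    Integrable.of_bound ((hc i).comp (measurable_pi_apply i)).aestronglyMeasurable (volume.real (K i) / 2)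
      (Filter.Eventually.of_forall fun t => by simpa using cdfc_abs_le (hf i) (t i))
  have hst : Integrable (fun t : ι → ℝ => |∑ i, c i * t i|) μ :=
    (integrable_finsetSum _ fun i _ => (hti i).const_mul _).abs
  have hsF : Integrable (fun t : ι → ℝ => |∑ i, c i * cdfc (K i) (t i)|) μ :=
    (integrable_finsetSum _ fun i _ => (hFi i).const_mul _).abs
  rw [← ofReal_integral_eq_lintegral_ofReal hst (Filter.Eventually.of_forall fun _ => abs_nonneg _),
    ← ofReal_integral_eq_lintegral_ofReal hsF (Filter.Eventually.of_forall fun _ => abs_nonneg _)]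
  apply ENNReal.ofReal_le_ofReal
  choose a ha using fun i => cdfc_exists_zero (hR i)
  set D : ι → ℝ → ℝ := fun i t => t - a i - cdfc (K i) t with hD
  have hDs : ∀ i t, 0 ≤ cdfc (K i) t * D i t := by
    intro i t
    rcases le_total (a i) t with h | h
    · have h3 := cdfc_mono (hf i) h
      have h4 := cdfc_sub_le (hf i) h
      rw [ha] at h3 h4
      exact mul_nonneg h3 (by simp only [hD]; linarith)
    · have h3 := cdfc_mono (hf i) h
      have h4 := cdfc_sub_le (hf i) h
      rw [ha] at h3 h4
      exact mul_nonneg_of_nonpos_of_nonpos h3 (by simp only [hD]; linarith)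
  have hDm : ∀ i, Measurable (D i) := fun i => by
    have := hc i
    simp only [hD]; fun_prop
  set S : (ι → ℝ) → ℝ := fun t => Real.sign (∑ i, c i * cdfc (K i) (t i)) with hS
  have hSm : Measurable S := measurable_rsign.comp (by fun_prop)
  have hSi : Integrable S μ := Integrable.of_bound hSm.aestronglyMeasurable 1
      (Filter.Eventually.of_forall fun t => by simpa using abs_rsign_le _)
  have hDi : ∀ i, Integrable (fun t : ι → ℝ => S t * (c i * D i (t i))) μ := by
    intro i
    apply Integrable.bdd_mul (c := 1) _ hSm.aestronglyMeasurable
      (Filter.Eventually.of_forall fun t => by simpa using abs_rsign_le _)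
    exact (((hti i).sub (integrable_const (a i))).sub (hFi i)).const_mul _
  have hpt : ∀ t, |∑ i, c i * cdfc (K i) (t i)| + (S t * (∑ i, c i * a i) + ∑ i, S t * (c i * D i (t i)))
      ≤ |∑ i, c i * t i| := by
    intro t
    have := abs_ge_sign (∑ i, c i * cdfc (K i) (t i)) ((∑ i, c i * a i) + ∑ i, c i * D i (t i))
    rw [mul_add, Finset.mul_sum (f := fun i => c i * D i (t i))] at this
    refine this.trans (le_of_eq ?_)
    congr 1
    rw [← Finset.sum_add_distrib, ← Finset.sum_add_distrib]
    apply Finset.sum_congr rfl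
    intro i _
    simp only [hD]; ring
  have hI1 : Integrable (fun t => S t * (∑ i, c i * a i)) μ := hSi.mul_const _
  have hI2 : Integrable (fun t : ι → ℝ => ∑ i, S t * (c i * D i (t i))) μ :=
    integrable_finsetSum _ fun i _ => hDi i
  have := integral_mono (hsF.add (hI1.add hI2)) hst hpt
  refine le_trans ?_ this
  rw [integral_add' hsF (hI1.add hI2), integral_add' hI1 hI2, integral_mul_const,
    integral_finsetSum _ fun i _ => hDi i]
  rw [show ∫ t, S t ∂μ = 0 from sign_int_zero K hK R hR c]
  have : 0 ≤ ∑ i, ∫ t, S t * (c i * D i (t i)) ∂μ :=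
    Finset.sum_nonneg fun i _ => sign_int_nonneg K hK R hR c i (D i) (hDm i) (hDs i)
  linarith
end

-- Part 3
lemma lintegral_split1 {k : ℕ} {f : (Fin (k+1) → ℝ) → ℝ≥0∞} (hf : Measurable f) :
    ∫⁻ x, f x = ∫⁻ y : Fin k → ℝ, ∫⁻ t : ℝ, f (Fin.cons t y) := by
  have h := (volume_preserving_piFinSuccAbove (fun _ : Fin (k+1) => ℝ) 0).symm
  rw [← h.lintegral_comp hf, Measure.volume_eq_prod, lintegral_prod_symm]
  · simp [MeasurableEquiv.piFinSuccAbove, Fin.insertNthEquiv]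
  · exact (hf.comp h.measurable).aemeasurable

lemma lintegral_split {ι : Type*} [Fintype ι] {k : ℕ} {f : (ι → Fin (k+1) → ℝ) → ℝ≥0∞} (hf : Measurable f) :
    ∫⁻ x, f x = ∫⁻ y : ι → Fin k → ℝ, ∫⁻ t : ι → ℝ, f (fun i => Fin.cons (t i) (y i)) := by
  have h1 : MeasurePreserving (fun (a : ι → ℝ × (Fin k → ℝ)) (i : ι) =>
      (MeasurableEquiv.piFinSuccAbove (fun _ : Fin (k+1) => ℝ) 0).symm (a i)) :=
    volume_preserving_pi (fun _ : ι => (volume_preserving_piFinSuccAbove (fun _ : Fin (k+1) => ℝ) 0).symm)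
  have h2 := (volume_measurePreserving_arrowProdEquivProdArrow ℝ (Fin k → ℝ) ι).symm
  have h := h1.comp h2
  rw [← h.lintegral_comp hf, Measure.volume_eq_prod, lintegral_prod_symm]
  · simp [MeasurableEquiv.piFinSuccAbove, Fin.insertNthEquiv, MeasurableEquiv.arrowProdEquivProdArrow, Equiv.arrowProdEquivProdArrow]
  · exact (hf.comp h.measurable).aemeasurable

/-- The fibre of a set over `y`. -/
def fib {k : ℕ} (K : Set (Fin (k+1) → ℝ)) (y : Fin k → ℝ) : Set ℝ := {t | Fin.cons t y ∈ K}

lemma measurable_cons {k : ℕ} : Measurable (fun p : (Fin k → ℝ) × ℝ => (Fin.cons p.2 p.1 : Fin (k+1) → ℝ)) := by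
  rw [measurable_pi_iff]
  intro i
  refine Fin.cases ?_ (fun j => ?_) i
  · simpa using measurable_snd
  · simp only [Fin.cons_succ]; fun_prop

lemma measurable_cons' {k : ℕ} (y : Fin k → ℝ) : Measurable (fun t : ℝ => (Fin.cons t y : Fin (k+1) → ℝ)) :=
  measurable_cons.comp (by fun_prop : Measurable fun t : ℝ => (y, t))

lemma fib_meas {k : ℕ} {K : Set (Fin (k+1) → ℝ)} (hK : MeasurableSet K) (y : Fin k → ℝ) :
    MeasurableSet (fib K y) := measurable_cons' y hK

lemma vol_fib {k : ℕ} {K : Set (Fin (k+1) → ℝ)} (hK : MeasurableSet K) :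
    volume K = ∫⁻ y, volume (fib K y) := by
  rw [← lintegral_indicator_one hK, lintegral_split1 (measurable_one.indicator hK)]
  congr 1; ext y
  rw [← lintegral_indicator_one (fib_meas hK y)]
  rfl

lemma vol_fib_meas {k : ℕ} {K : Set (Fin (k+1) → ℝ)} (hK : MeasurableSet K) :
    Measurable fun y => volume (fib K y) := by
  exact measurable_measure_prodMk_left (measurable_cons hK)

/-- The random simplex functional. -/
noncomputable def detI {m : ℕ} (K : Set (Fin m → ℝ)) : ℝ≥0∞ :=
  ∫⁻ x in Set.univ.pi (fun _ : Fin m => K), ENNReal.ofReal |(Matrix.of x).det|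

lemma measurable_det {m : ℕ} : Measurable fun x : Fin m → Fin m → ℝ => (Matrix.of x).det := by
  apply Continuous.measurable
  apply Continuous.matrix_det
  exact continuous_id

/-- Steiner symmetrization along the first coordinate. -/
def steiner {k : ℕ} (K : Set (Fin (k+1) → ℝ)) : Set (Fin (k+1) → ℝ) :=
  {x | |x 0| < volume.real (fib K (Fin.tail x)) / 2}

lemma fib_steiner {k : ℕ} (K : Set (Fin (k+1) → ℝ)) (y : Fin k → ℝ) :
    fib (steiner K) y = Set.Ioo (-(volume.real (fib K y) / 2)) (volume.real (fib K y) / 2) := by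
  ext t; simp [fib, steiner, abs_lt]

lemma steiner_meas {k : ℕ} {K : Set (Fin (k+1) → ℝ)} (hK : MeasurableSet K) : MeasurableSet (steiner K) := by
  apply measurableSet_lt
  · fun_prop
  · have h1 : Measurable (fun x : Fin (k+1) → ℝ => Fin.tail x) := by
      unfold Fin.tail; fun_prop
    have := ((vol_fib_meas hK).comp h1).ennreal_toReal
    exact this.div_const 2

lemma detI_split {k : ℕ} {K : Set (Fin (k+1) → ℝ)} (hK : MeasurableSet K) :
    detI K = ∫⁻ y : Fin (k+1) → Fin k → ℝ, ∫⁻ t in Set.univ.pi (fun i => fib K (y i)),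
      ENNReal.ofReal |∑ i : Fin (k+1), ((-1) ^ (i : ℕ) *
        (Matrix.of (fun j => y (i.succAbove j))).det) * t i| := by
  unfold detI
  have hS : MeasurableSet (Set.univ.pi (fun _ : Fin (k+1) => K)) := MeasurableSet.univ_pi fun _ => hK
  rw [← lintegral_indicator hS, lintegral_split]
  · congr 1; ext y
    rw [← lintegral_indicator (MeasurableSet.univ_pi fun i => fib_meas hK (y i))]
    congr 1; ext t
    simp only [Set.indicator, Set.mem_univ_pi, fib, Set.mem_ofPred_eq]
    rw [Matrix.det_succ_column_zero]
    have hsum : ∀ a b : ℝ, a = b → ∀ p : Prop, ∀ _ : Decidable p,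
        (if p then ENNReal.ofReal |a| else 0) = if p then ENNReal.ofReal |b| else 0 := by
      rintro a b rfl p _; rfl
    apply hsum
    apply Finset.sum_congr rfl
    intro i _
    simp only [Matrix.of_apply, Fin.cons_zero]
    rw [show (Matrix.of fun i => (Fin.cons (t i) (y i) : Fin (k+1) → ℝ)).submatrix i.succAbove Fin.succ =
      Matrix.of (fun j => y (i.succAbove j)) from by ext a b; simp]
    ring
  · exact (measurable_det.abs.ennreal_ofReal).indicator hS

lemma detI_mono {m : ℕ} {K K' : Set (Fin m → ℝ)} (h : K ⊆ K') : detI K ≤ detI K' := by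
  unfold detI
  exact lintegral_mono_set (Set.pi_mono fun _ _ => h)

lemma detI_steiner {k : ℕ} {K : Set (Fin (k+1) → ℝ)} (hK : MeasurableSet K) (R : ℝ)
    (hR : ∀ x ∈ K, |x 0| ≤ R) : detI (steiner K) ≤ detI K := by
  rw [detI_split hK, detI_split (steiner_meas hK)]
  apply lintegral_mono
  intro y
  refine le_trans (lintegral_mono_set ?_) (steiner_fiber (fun i => fib K (y i)) (fun i => fib_meas hK _) R ?_ _)
  · apply Set.pi_mono
    intro i _
    rw [fib_steiner]
    exact Set.Ioo_subset_Icc_self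
  · intro i t ht
    have := hR _ ht
    simpa [abs_le] using this

/-- The Euclidean ball in coordinates. -/
def sqBall (m : ℕ) (r : ℝ) : Set (Fin m → ℝ) := {x | ∑ i, x i ^ 2 ≤ r ^ 2}

lemma sqBall_meas (m : ℕ) (r : ℝ) : MeasurableSet (sqBall m r) :=
  measurableSet_le (by fun_prop) (by fun_prop)

lemma fib_sqBall {k : ℕ} (r : ℝ) (y : Fin k → ℝ) :
    fib (sqBall (k+1) r) y = {t | t ^ 2 ≤ r ^ 2 - ∑ i, y i ^ 2} := by
  ext t
  simp only [fib, sqBall, Set.mem_ofPred_eq, Fin.sum_univ_succ, Fin.cons_zero, Fin.cons_succ]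
  constructor <;> intro h <;> linarith

lemma fib_sqBall_cases {k : ℕ} (r : ℝ) (y : Fin k → ℝ) :
    fib (sqBall (k+1) r) y = ∅ ∨ ∃ ρ : ℝ, 0 ≤ ρ ∧ fib (sqBall (k+1) r) y = Set.Icc (-ρ) ρ := by
  rw [fib_sqBall]
  rcases lt_or_ge (r ^ 2 - ∑ i, y i ^ 2) 0 with h | h
  · left; ext t; simp only [Set.mem_ofPred_eq, Set.mem_empty_iff_false, iff_false, not_le]
    exact h.trans_le (sq_nonneg t)
  · right; refine ⟨√(r ^ 2 - ∑ i, y i ^ 2), Real.sqrt_nonneg _, ?_⟩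
    ext t
    simp only [Set.mem_ofPred_eq, Set.mem_Icc]
    rw [Real.sq_le h]

lemma fib_mono {k : ℕ} {K K' : Set (Fin (k+1) → ℝ)} (h : K ⊆ K') (y : Fin k → ℝ) : fib K y ⊆ fib K' y :=
  fun _ ht => h ht

lemma sqBall_coord {m : ℕ} {R : ℝ} (hR : 0 ≤ R) {x : Fin m → ℝ} (hx : x ∈ sqBall m R) (i : Fin m) : |x i| ≤ R := by
  apply abs_le_of_sq_le_sq _ hR
  exact (Finset.single_le_sum (f := fun i => x i ^ 2) (fun i _ => sq_nonneg _) (Finset.mem_univ i)).trans hx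

lemma steiner_subset {k : ℕ} {K : Set (Fin (k+1) → ℝ)} {R : ℝ} (h : K ⊆ sqBall (k+1) R) :
    steiner K ⊆ sqBall (k+1) R := by
  intro x hx
  have hx' : x 0 ∈ fib (sqBall (k+1) R) (Fin.tail x) := by
    have hm := fib_mono h (Fin.tail x)
    simp only [steiner, Set.mem_ofPred_eq] at hx
    rcases fib_sqBall_cases R (Fin.tail x) with h0 | ⟨ρ, hρ, h0⟩
    · rw [h0, Set.subset_empty_iff] at hm
      rw [hm] at hx
      simp at hx
      exact absurd hx (not_lt.2 (abs_nonneg _))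
    · rw [h0] at hm ⊢
      have : volume.real (fib K (Fin.tail x)) ≤ volume.real (Set.Icc (-ρ) ρ) :=
        measureReal_mono hm (by simp)
      have h2 : volume.real (Set.Icc (-ρ) ρ) = 2 * ρ := by
        rw [measureReal_def, Real.volume_Icc, ENNReal.toReal_ofReal (by linarith)]; ring
      have : |x 0| ≤ ρ := by linarith
      exact abs_le.1 this
  simpa [fib] using hx'

lemma fib_ne_top {k : ℕ} {K : Set (Fin (k+1) → ℝ)} {R : ℝ} (h : K ⊆ sqBall (k+1) R) (y : Fin k → ℝ) :
    volume (fib K y) ≠ ⊤ := by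
  have hm := fib_mono h y
  rcases fib_sqBall_cases R y with h0 | ⟨ρ, hρ, h0⟩
  · rw [h0, Set.subset_empty_iff] at hm; simp [hm]
  · rw [h0] at hm; exact measure_ne_top_of_subset hm (by simp)

lemma vol_steiner {k : ℕ} {K : Set (Fin (k+1) → ℝ)} (hK : MeasurableSet K) {R : ℝ} (h : K ⊆ sqBall (k+1) R) :
    volume (steiner K) = volume K := by
  rw [vol_fib hK, vol_fib (steiner_meas hK)]
  congr 1; ext y
  rw [fib_steiner, Real.volume_Ioo]
  rw [show volume.real (fib K y) / 2 - -(volume.real (fib K y) / 2) = volume.real (fib K y) by ring,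
    ofReal_measureReal (fib_ne_top h y)]

lemma steiner_gain {k : ℕ} {K : Set (Fin (k+1) → ℝ)} (hK : MeasurableSet K) {R r d : ℝ} (h : K ⊆ sqBall (k+1) R) :
    volume (K ∩ sqBall (k+1) r) +
      volume ((sqBall (k+1) r \ K) ∩ (fun x => x + Pi.single 0 d) ⁻¹' (K \ sqBall (k+1) r)) ≤
      volume (steiner K ∩ sqBall (k+1) r) := by
  have hB := sqBall_meas (k+1) r
  have htr : Measurable (fun x : Fin (k+1) → ℝ => x + Pi.single 0 d) := by fun_prop
  have hM : MeasurableSet ((sqBall (k+1) r \ K) ∩ (fun x => x + Pi.single 0 d) ⁻¹' (K \ sqBall (k+1) r)) :=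
    (hB.diff hK).inter (htr (hK.diff hB))
  rw [vol_fib (hK.inter hB), vol_fib ((steiner_meas hK).inter hB), vol_fib hM,
    ← lintegral_add_left (vol_fib_meas (hK.inter hB))]
  apply lintegral_mono
  intro y
  simp only
  have hFm := fib_meas hK y
  have hGm := fib_meas hB y
  have hF := fib_ne_top h y
  have e1 : fib (K ∩ sqBall (k+1) r) y = fib K y ∩ fib (sqBall (k+1) r) y := rfl
  have e2 : fib (steiner K ∩ sqBall (k+1) r) y = fib (steiner K) y ∩ fib (sqBall (k+1) r) y := rfl
  have e3 : fib ((sqBall (k+1) r \ K) ∩ (fun x => x + Pi.single 0 d) ⁻¹' (K \ sqBall (k+1) r)) y =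
      (fib (sqBall (k+1) r) y \ fib K y) ∩ (fun t => t + d) ⁻¹' (fib K y \ fib (sqBall (k+1) r) y) := by
    have : ∀ t : ℝ, (Fin.cons t y + Pi.single 0 d : Fin (k+1) → ℝ) = Fin.cons (t + d) y := by
      intro t; ext i; refine Fin.cases ?_ (fun j => ?_) i <;> simp
    ext t
    simp [fib, this]
  rw [e1, e2, e3, fib_steiner]
  set F := fib K y
  set G := fib (sqBall (k+1) r) y with hG
  have b1 : volume (F ∩ G) + volume ((G \ F) ∩ (fun t => t + d) ⁻¹' (F \ G)) ≤ volume G := by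
    rw [← measure_inter_add_sdiff G hFm, Set.inter_comm]
    gcongr
    exact Set.inter_subset_left
  have b2 : volume (F ∩ G) + volume ((G \ F) ∩ (fun t => t + d) ⁻¹' (F \ G)) ≤ volume F := by
    rw [← measure_inter_add_sdiff F hGm]
    refine add_le_add le_rfl ?_
    calc volume ((G \ F) ∩ (fun t => t + d) ⁻¹' (F \ G)) ≤ volume ((fun t => t + d) ⁻¹' (F \ G)) :=
          measure_mono Set.inter_subset_right
      _ = volume (F \ G) := measure_preimage_add_right _ _ _
  rcases fib_sqBall_cases r y with h0 | ⟨ρ, hρ, h0⟩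
  · rw [← hG] at h0; rw [h0]; simp
  · rw [← hG] at h0
    have hsub : Set.Ioo (-(min (volume.real F / 2) ρ)) (min (volume.real F / 2) ρ) ⊆
      Set.Ioo (-(volume.real F / 2)) (volume.real F / 2) ∩ G := by
      rw [h0]
      rintro t ⟨h1, h2⟩
      have := min_le_left (volume.real F / 2) ρ
      have := min_le_right (volume.real F / 2) ρ
      refine ⟨⟨?_, ?_⟩, ⟨?_, ?_⟩⟩ <;> linarith
    refine le_trans ?_ (measure_mono hsub)
    rw [Real.volume_Ioo]
    rcases min_cases (volume.real F / 2) ρ with ⟨h1, -⟩ | ⟨h1, -⟩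
    · rw [h1, show volume.real F / 2 - -(volume.real F / 2) = volume.real F by ring, ofReal_measureReal hF]
      exact b2
    · rw [h1]
      rw [h0, Real.volume_Icc] at b1
      rw [h0]; exact b1

-- Part 4
section linear
variable {m : ℕ}

lemma mulVec_meas (M : Matrix (Fin m) (Fin m) ℝ) : Measurable (fun x : Fin m → ℝ => M.mulVec x) := by
  apply Continuous.measurable; fun_prop

lemma vol_preimage_mulVec {M : Matrix (Fin m) (Fin m) ℝ} (hM : M.det ≠ 0) {K : Set (Fin m → ℝ)}
    (hK : MeasurableSet K) : ENNReal.ofReal |M.det| * volume ((fun x => M.mulVec x) ⁻¹' K) = volume K := by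
  have h := Real.map_matrix_volume_pi_eq_smul_volume_pi hM
  have h2 : Measure.map (fun x : Fin m → ℝ => M.mulVec x) volume K = volume ((fun x => M.mulVec x) ⁻¹' K) :=
    Measure.map_apply (mulVec_meas M) hK
  have h3 : (Matrix.toLin' M : (Fin m → ℝ) → Fin m → ℝ) = fun x => M.mulVec x := by
    ext x; simp
  rw [h3] at h
  rw [h, Measure.smul_apply, smul_eq_mul] at h2
  rw [← h2, ← mul_assoc, ← ENNReal.ofReal_mul (abs_nonneg _), ← abs_mul, mul_inv_cancel₀ hM]
  simp

lemma vol_map_mulVec {M : Matrix (Fin m) (Fin m) ℝ} (hM : M.det ≠ 0) :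
    (volume : Measure (Fin m → Fin m → ℝ)) =
      (ENNReal.ofReal |M.det|) ^ m • Measure.map (fun (x : Fin m → Fin m → ℝ) i => M.mulVec (x i)) volume := by
  have hmeas : Measurable (fun (x : Fin m → Fin m → ℝ) i => M.mulVec (x i)) := by
    apply Continuous.measurable; fun_prop
  conv_lhs => rw [volume_pi]
  apply Measure.pi_eq
  intro s hs
  rw [Measure.smul_apply, Measure.map_apply hmeas (MeasurableSet.univ_pi hs)]
  have : (fun (x : Fin m → Fin m → ℝ) i => M.mulVec (x i)) ⁻¹' Set.univ.pi s =
      Set.univ.pi fun i => (fun x => M.mulVec x) ⁻¹' s i := by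
    ext x; simp
  rw [this, volume_pi_pi, smul_eq_mul]
  rw [show (ENNReal.ofReal |M.det|) ^ m = ∏ _i : Fin m, ENNReal.ofReal |M.det| by simp, ← Finset.prod_mul_distrib]
  apply Finset.prod_congr rfl
  intro i _
  exact vol_preimage_mulVec hM (hs i)

lemma detI_linear {M : Matrix (Fin m) (Fin m) ℝ} (hM : M.det ≠ 0) {K : Set (Fin m → ℝ)}
    (hK : MeasurableSet K) :
    (ENNReal.ofReal |M.det|) ^ (m + 1) * detI ((fun x => M.mulVec x) ⁻¹' K) = detI K := by
  have hmeas : Measurable (fun (x : Fin m → Fin m → ℝ) i => M.mulVec (x i)) := by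
    apply Continuous.measurable; fun_prop
  have hS : MeasurableSet (Set.univ.pi (fun _ : Fin m => K)) := MeasurableSet.univ_pi fun _ => hK
  have hS' : MeasurableSet (Set.univ.pi (fun _ : Fin m => (fun x => M.mulVec x) ⁻¹' K)) :=
    MeasurableSet.univ_pi fun _ => mulVec_meas M hK
  symm
  unfold detI
  rw [← lintegral_indicator hS, ← lintegral_indicator hS']
  conv_lhs => rw [vol_map_mulVec hM]
  rw [lintegral_smul_measure, lintegral_map ((measurable_det.abs.ennreal_ofReal).indicator hS) hmeas,
    pow_succ, smul_eq_mul, mul_assoc, ← lintegral_const_mul _ ((measurable_det.abs.ennreal_ofReal).indicator hS')]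
  congr 2; ext x
  have e : (Matrix.of fun i => M.mulVec (x i)) = (Matrix.of x) * M.transpose := by
    ext i j
    simp [Matrix.mul_apply, Matrix.mulVec, dotProduct, mul_comm]
  by_cases hx : ∀ i, M.mulVec (x i) ∈ K
  · rw [Set.indicator_of_mem (by simpa using hx), Set.indicator_of_mem (by simpa using hx), e,
      Matrix.det_mul, Matrix.det_transpose, abs_mul, ENNReal.ofReal_mul (abs_nonneg _), mul_comm]
  · rw [Set.indicator_of_notMem (by simpa using hx), Set.indicator_of_notMem (by simpa using hx), mul_zero]

lemma sqBall_eq (r : ℝ) (hr : 0 ≤ r) : sqBall m r = (WithLp.toLp 2) ⁻¹' (closedBall (0 : EuclideanSpace ℝ (Fin m)) r) := by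
  ext x
  simp only [sqBall, Set.mem_ofPred_eq, Set.mem_preimage, mem_closedBall, dist_zero_right]
  rw [EuclideanSpace.norm_eq, Real.sqrt_le_left hr]
  simp

lemma vol_sqBall (r : ℝ) (hr : 0 ≤ r) : volume (sqBall m r) = volume (closedBall (0 : EuclideanSpace ℝ (Fin m)) r) := by
  rw [sqBall_eq r hr, (PiLp.volume_preserving_toLp (Fin m)).measure_preimage measurableSet_closedBall.nullMeasurableSet]

lemma vol_sqBall_ne_top (r : ℝ) (hr : 0 ≤ r) : volume (sqBall m r) ≠ ⊤ := by
  rw [vol_sqBall r hr]; exact measure_closedBall_lt_top.ne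

lemma vol_sqBall_ne_zero (r : ℝ) (hr : 0 < r) : volume (sqBall m r) ≠ 0 := by
  rw [vol_sqBall r hr.le]; exact (measure_closedBall_pos _ _ hr).ne'

end linear

lemma ortho_exists {k : ℕ} (d : Fin (k+1) → ℝ) : ∃ (M : Matrix (Fin (k+1)) (Fin (k+1)) ℝ) (ρ : ℝ),
    |M.det| = 1 ∧ (∀ x, ∑ i, (M.mulVec x) i ^ 2 = ∑ i, x i ^ 2) ∧ M.mulVec (Pi.single 0 ρ) = d := by
  set D : EuclideanSpace ℝ (Fin (k+1)) := WithLp.toLp 2 d with hD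
  set v : EuclideanSpace ℝ (Fin (k+1)) := EuclideanSpace.single 0 ‖D‖ with hv
  have hn : ‖v‖ = ‖D‖ := by simp [hv]
  have hr := Submodule.reflection_sub hn
  set P := Submodule.reflection (Submodule.span ℝ {v - D})ᗮ with hP
  let f : (Fin (k+1) → ℝ) →ₗ[ℝ] (Fin (k+1) → ℝ) :=
    (WithLp.linearEquiv 2 ℝ (Fin (k+1) → ℝ)).toLinearMap ∘ₗ P.toLinearEquiv.toLinearMap ∘ₗ
      (WithLp.linearEquiv 2 ℝ (Fin (k+1) → ℝ)).symm.toLinearMap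
  have hf : ∀ x, f x = WithLp.ofLp (P (WithLp.toLp 2 x)) := fun x => rfl
  have hM : ∀ x, (LinearMap.toMatrix' f).mulVec x = f x := fun x => LinearMap.toMatrix'_mulVec f x
  refine ⟨LinearMap.toMatrix' f, ‖D‖, ?_, ?_, ?_⟩
  · have hff : f ∘ₗ f = LinearMap.id := by
      ext1 x
      ext1
      simp [hf, hP]
    have : LinearMap.toMatrix' f * LinearMap.toMatrix' f = 1 := by
      rw [← LinearMap.toMatrix'_comp, hff, LinearMap.toMatrix'_id]
    have h2 := congrArg Matrix.det this
    rw [Matrix.det_mul, Matrix.det_one] at h2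
    have h3 : |(LinearMap.toMatrix' f).det| * |(LinearMap.toMatrix' f).det| = 1 := by
      rw [← abs_mul, h2, abs_one]
    nlinarith [abs_nonneg (LinearMap.toMatrix' f).det]
  · intro x
    rw [hM, hf]
    have h1 := EuclideanSpace.norm_sq_eq (P (WithLp.toLp 2 x))
    have h2 := EuclideanSpace.norm_sq_eq (WithLp.toLp 2 x : EuclideanSpace ℝ (Fin (k+1)))
    rw [LinearIsometryEquiv.norm_map, h2] at h1
    simpa using h1.symm
  · rw [hM, hf]
    exact congrArg WithLp.ofLp hr

-- Part 5
/-- Fubini: some translate overlaps well. -/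
lemma exists_translate {m : ℕ} {A C : Set (Fin m → ℝ)} (hA : MeasurableSet A) (hC : MeasurableSet C) {R : ℝ}
    (hAR : ∀ x ∈ A, ∀ i, |x i| ≤ R) (hCR : ∀ x ∈ C, ∀ i, |x i| ≤ R) {q : ℝ≥0∞}
    (hq : q * volume (Set.Icc (fun _ => -(2*R)) (fun _ => 2*R) : Set (Fin m → ℝ)) < volume A * volume C) :
    ∃ d : Fin m → ℝ, q < volume (A ∩ (fun x => x + d) ⁻¹' C) := by
  by_contra hcon
  push Not at hcon
  set W := (Set.Icc (fun _ => -(2*R)) (fun _ => 2*R) : Set (Fin m → ℝ))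
  have key : ∫⁻ d, volume (A ∩ (fun x => x + d) ⁻¹' C) = volume A * volume C := by
    have h1 : ∀ d : Fin m → ℝ, volume (A ∩ (fun x => x + d) ⁻¹' C) =
        ∫⁻ x, A.indicator 1 x * C.indicator (1 : (Fin m → ℝ) → ℝ≥0∞) (x + d) := by
      intro d
      rw [← lintegral_indicator_one (hA.inter ((show Measurable (fun x : Fin m → ℝ => x + d) by fun_prop) hC))]
      congr 1; ext x
      by_cases h1 : x ∈ A <;> by_cases h2 : x + d ∈ C <;> simp [Set.indicator, h1, h2]
    simp_rw [h1]
    rw [lintegral_lintegral_swap]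
    · have : ∀ x : Fin m → ℝ, ∫⁻ d, A.indicator 1 x * C.indicator (1 : (Fin m → ℝ) → ℝ≥0∞) (x + d) =
          A.indicator 1 x * volume C := by
        intro x
        rw [lintegral_const_mul _ (show Measurable (fun d => C.indicator (1 : (Fin m → ℝ) → ℝ≥0∞) (x + d)) from
            (measurable_one.indicator hC).comp (measurable_const_add x)),
          lintegral_add_left_eq_self (fun d => C.indicator (1 : (Fin m → ℝ) → ℝ≥0∞) d) x,
          lintegral_indicator_one hC]
      simp_rw [this]
      rw [lintegral_mul_const _ (measurable_one.indicator hA), lintegral_indicator_one hA]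
    · apply Measurable.aemeasurable
      exact ((measurable_one.indicator hA).comp measurable_snd).mul
        ((measurable_one.indicator hC).comp (measurable_snd.add measurable_fst))
  have h2 : ∫⁻ d, volume (A ∩ (fun x => x + d) ⁻¹' C) ≤ ∫⁻ d, W.indicator (fun _ => q) d := by
    apply lintegral_mono
    intro d
    by_cases hd : d ∈ W
    · simp only [Set.indicator_of_mem hd]; exact hcon d
    · simp only [Set.indicator_of_notMem hd]
      rw [nonpos_iff_eq_zero]
      have : A ∩ (fun x => x + d) ⁻¹' C = ∅ := by
        by_contra hne
        obtain ⟨x, hx, hxd⟩ := Set.nonempty_iff_ne_empty.2 hne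
        apply hd
        constructor <;> intro i
        · have a1 := abs_le.1 (hAR x hx i)
          have a2 := abs_le.1 (hCR _ hxd i)
          simp only [Pi.add_apply] at a2
          simp only; linarith
        · have a1 := abs_le.1 (hAR x hx i)
          have a2 := abs_le.1 (hCR _ hxd i)
          simp only [Pi.add_apply] at a2
          simp only; linarith
      rw [this]; simp
  rw [key, lintegral_indicator_const measurableSet_Icc] at h2
  exact absurd hq (not_lt.2 h2)

/-- One step of the symmetrization procedure. -/
lemma one_step {k : ℕ} {K : Set (Fin (k+1) → ℝ)} (hK : MeasurableSet K) {R r : ℝ} (hr : 0 ≤ r) (hrR : r ≤ R)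
    (hKR : K ⊆ sqBall (k+1) R) {q : ℝ≥0∞}
    (hq : q * volume (Set.Icc (fun _ => -(2*R)) (fun _ => 2*R) : Set (Fin (k+1) → ℝ)) <
      volume (sqBall (k+1) r \ K) * volume (K \ sqBall (k+1) r)) :
    ∃ K' : Set (Fin (k+1) → ℝ), MeasurableSet K' ∧ K' ⊆ sqBall (k+1) R ∧ volume K' = volume K ∧
      detI K' ≤ detI K ∧ volume (K ∩ sqBall (k+1) r) + q ≤ volume (K' ∩ sqBall (k+1) r) := by
  have hB := sqBall_meas (k+1) r
  have hR : 0 ≤ R := hr.trans hrR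
  have hBR : sqBall (k+1) r ⊆ sqBall (k+1) R := fun x hx => le_trans (α := ℝ) hx (by gcongr)
  obtain ⟨d, hd⟩ := exists_translate (hB.diff hK) (hK.diff hB) (R := R)
    (fun x hx i => sqBall_coord hR (hBR hx.1) i) (fun x hx i => sqBall_coord hR (hKR hx.1) i) hq
  obtain ⟨M, ρ, hdet, hiso, hMd⟩ := ortho_exists d
  have hdet0 : M.det ≠ 0 := by intro h; rw [h] at hdet; simp at hdet
  have hv : ∀ {S : Set (Fin (k+1) → ℝ)}, MeasurableSet S → volume ((fun x => M.mulVec x) ⁻¹' S) = volume S := by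
    intro S hS
    have := vol_preimage_mulVec hdet0 hS
    rw [hdet] at this; simpa using this
  have hball : ∀ s : ℝ, (fun x => M.mulVec x) ⁻¹' (sqBall (k+1) s) = sqBall (k+1) s := by
    intro s; ext x; simp only [sqBall, Set.mem_preimage, Set.mem_ofPred_eq, hiso]
  set K₁ := (fun x => M.mulVec x) ⁻¹' K with hK₁
  have hK₁m : MeasurableSet K₁ := mulVec_meas M hK
  have hK₁R : K₁ ⊆ sqBall (k+1) R := by
    rw [← hball R]; exact Set.preimage_mono hKR
  refine ⟨steiner K₁, steiner_meas hK₁m, steiner_subset hK₁R, ?_, ?_, ?_⟩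
  · rw [vol_steiner hK₁m hK₁R, hv hK]
  · have := detI_linear hdet0 hK
    rw [hdet] at this
    simp only [ENNReal.ofReal_one, one_pow, one_mul] at this
    rw [← this]
    exact detI_steiner hK₁m R fun x hx => sqBall_coord hR (hK₁R hx) 0
  · have hg := steiner_gain hK₁m (R := R) (r := r) (d := ρ) hK₁R
    refine le_trans ?_ hg
    have e1 : K₁ ∩ sqBall (k+1) r = (fun x => M.mulVec x) ⁻¹' (K ∩ sqBall (k+1) r) := by
      rw [Set.preimage_inter, hball]
    have e2 : (sqBall (k+1) r \ K₁) ∩ (fun x => x + Pi.single 0 ρ) ⁻¹' (K₁ \ sqBall (k+1) r) =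
        (fun x => M.mulVec x) ⁻¹' ((sqBall (k+1) r \ K) ∩ (fun x => x + d) ⁻¹' (K \ sqBall (k+1) r)) := by
      ext x
      have : ∀ y, y ∈ sqBall (k+1) r ↔ M.mulVec y ∈ sqBall (k+1) r := by
        intro y
        conv_lhs => rw [← hball r]
        rfl
      simp only [Set.mem_inter_iff, Set.mem_preimage, Set.mem_sdiff, hK₁]
      have a1 := this x
      have a2 := this ((fun x : Fin (k+1) → ℝ => x + Pi.single 0 ρ) x)
      simp only at a2
      rw [Matrix.mulVec_add, hMd] at a2
      rw [Matrix.mulVec_add, hMd, a1, a2]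
    rw [e1, e2, hv (hK.inter hB), hv ((hB.diff hK).inter ((show Measurable (fun x : Fin (k+1) → ℝ => x + d) by fun_prop) (hK.diff hB)))]
    gcongr

lemma approx_ball {k : ℕ} {K₀ : Set (Fin (k+1) → ℝ)} (hK₀ : MeasurableSet K₀) {R r : ℝ} (hr : 0 < r) (hrR : r ≤ R)
    (hKR : K₀ ⊆ sqBall (k+1) R) (hvol : volume K₀ = volume (sqBall (k+1) r)) {ε : ℝ} (hε : 0 < ε) :
    ∃ K : Set (Fin (k+1) → ℝ), MeasurableSet K ∧ detI K ≤ detI K₀ ∧ volume.real (sqBall (k+1) r \ K) < ε := by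
  have hB := sqBall_meas (k+1) r
  have hBt : volume (sqBall (k+1) r) ≠ ⊤ := vol_sqBall_ne_top r hr.le
  have hR : 0 < R := hr.trans_le hrR
  set C : Set (Set (Fin (k+1) → ℝ)) := {K | MeasurableSet K ∧ K ⊆ sqBall (k+1) R ∧
    volume K = volume (sqBall (k+1) r) ∧ detI K ≤ detI K₀} with hC
  set η : Set (Fin (k+1) → ℝ) → ℝ := fun K => volume.real (sqBall (k+1) r \ K) with hη
  set s := sInf (Set.image η C) with hs
  have hbdd : BddBelow (Set.image η C) := ⟨0, by rintro _ ⟨K, -, rfl⟩; exact measureReal_nonneg⟩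
  have hne : (Set.image η C).Nonempty := ⟨_, K₀, ⟨hK₀, hKR, hvol, le_rfl⟩, rfl⟩
  have hs0 : 0 ≤ s := le_csInf hne (by rintro _ ⟨K, -, rfl⟩; exact measureReal_nonneg)
  suffices hs' : s < ε by
    obtain ⟨_, ⟨K, hKC, rfl⟩, hlt⟩ := exists_lt_of_csInf_lt hne hs'
    exact ⟨K, hKC.1, hKC.2.2.2, hlt⟩
  rcases hs0.eq_or_lt with h0 | hpos
  · rw [← h0]; exact hε
  exfalso
  set W := volume.real (Set.Icc (fun _ => -(2*R)) (fun _ => 2*R) : Set (Fin (k+1) → ℝ)) with hW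
  have hWt : volume (Set.Icc (fun _ => -(2*R)) (fun _ => 2*R) : Set (Fin (k+1) → ℝ)) ≠ ⊤ :=
    isCompact_Icc.measure_lt_top.ne
  have hW0 : 0 < W := by
    rw [hW, measureReal_def, Real.volume_Icc_pi_toReal]
    · apply Finset.prod_pos; intro i _; linarith
    · intro i; simp only; linarith
  set δ := s ^ 2 / (2 * W) with hδ
  have hδ0 : 0 < δ := by positivity
  obtain ⟨_, ⟨K, ⟨hK, hKR', hKv, hKd⟩, rfl⟩, hlt⟩ := exists_lt_of_csInf_lt hne (show sInf (Set.image η C) < s + δ by linarith)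
  have hsη : s ≤ η K := csInf_le hbdd ⟨K, ⟨hK, hKR', hKv, hKd⟩, rfl⟩
  have hKt : volume K ≠ ⊤ := by rw [hKv]; exact hBt
  have e1 : volume.real (sqBall (k+1) r ∩ K) + η K = volume.real (sqBall (k+1) r) :=
    measureReal_inter_add_sdiff hK hBt
  have e2 : volume.real (K ∩ sqBall (k+1) r) + volume.real (K \ sqBall (k+1) r) = volume.real K :=
    measureReal_inter_add_sdiff hB hKt
  have e3 : volume.real K = volume.real (sqBall (k+1) r) := by simp only [measureReal_def, hKv]
  have e4 : volume.real (K \ sqBall (k+1) r) = η K := by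
    rw [Set.inter_comm] at e1; linarith
  obtain ⟨K', hK', hK'R, hK'v, hK'd, hK'g⟩ := one_step hK (R := R) (r := r) hr.le hrR hKR'
    (q := ENNReal.ofReal δ) (by
      rw [← ofReal_measureReal hWt, ← ofReal_measureReal (measure_ne_top_of_subset Set.sdiff_subset hKt),
        ← ofReal_measureReal (measure_ne_top_of_subset Set.sdiff_subset hBt), e4,
        ← ENNReal.ofReal_mul hδ0.le, ← ENNReal.ofReal_mul measureReal_nonneg]
      have hη0 : 0 < η K := hpos.trans_le hsη
      rw [ENNReal.ofReal_lt_ofReal_iff (by exact mul_pos hη0 hη0)]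
      have : δ * W = s ^ 2 / 2 := by rw [hδ]; field_simp
      change δ * W < η K * η K
      rw [this]; nlinarith)
  have hK'C : K' ∈ C := ⟨hK', hK'R, hK'v.trans hKv, hK'd.trans hKd⟩
  have e5 : volume.real (sqBall (k+1) r ∩ K') + η K' = volume.real (sqBall (k+1) r) :=
    measureReal_inter_add_sdiff hK' hBt
  have e6 : volume.real (K ∩ sqBall (k+1) r) + δ ≤ volume.real (K' ∩ sqBall (k+1) r) := by
    have t1 : volume (K ∩ sqBall (k+1) r) ≠ ⊤ := measure_ne_top_of_subset Set.inter_subset_left hKt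
    have t2 : volume (K' ∩ sqBall (k+1) r) ≠ ⊤ := measure_ne_top_of_subset Set.inter_subset_right hBt
    have := ENNReal.toReal_mono t2 hK'g
    rw [ENNReal.toReal_add t1 ENNReal.ofReal_ne_top, ENNReal.toReal_ofReal hδ0.le] at this
    exact this
  have e7 : s ≤ η K' := csInf_le hbdd ⟨K', hK'C, rfl⟩
  rw [Set.inter_comm] at e1 e5
  linarith

lemma det_bound {m : ℕ} {r : ℝ} (hr : 0 ≤ r) {x : Fin m → Fin m → ℝ} (hx : ∀ i, x i ∈ sqBall m r) :
    |(Matrix.of x).det| ≤ (m.factorial : ℝ) * r ^ m := by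
  have := Matrix.det_le (A := Matrix.of x) (abv := AbsoluteValue.abs) (x := r)
    (fun i j => sqBall_coord hr (hx i) j)
  simpa [nsmul_eq_mul] using this

lemma detI_ball_le {m : ℕ} {K : Set (Fin m → ℝ)} (hK : MeasurableSet K) {r : ℝ} (hr : 0 ≤ r) :
    detI (sqBall m r) ≤ detI K + (m : ℝ≥0∞) * (ENNReal.ofReal ((m.factorial : ℝ) * r ^ m) *
      (volume (sqBall m r) ^ (m - 1) * volume (sqBall m r \ K))) := by
  set B := sqBall m r with hBdef
  have hB : MeasurableSet B := sqBall_meas m r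
  set S : Fin m → Set (Fin m → Fin m → ℝ) := fun i => Set.univ.pi (fun j => if j = i then B \ K else B) with hS
  have hsub : Set.univ.pi (fun _ : Fin m => B) ⊆ Set.univ.pi (fun _ : Fin m => K) ∪ ⋃ i, S i := by
    intro x hx
    by_cases h : ∀ i, x i ∈ K
    · exact Or.inl (fun i _ => h i)
    · right
      push Not at h
      obtain ⟨i, hi⟩ := h
      refine Set.mem_iUnion.2 ⟨i, fun j _ => ?_⟩
      by_cases hj : j = i
      · subst hj; simp only [if_true]; exact ⟨hx j trivial, hi⟩
      · simp only [hj, if_false]; exact hx j trivial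
  have hSv : ∀ i, volume (S i) = volume B ^ (m - 1) * volume (B \ K) := by
    intro i
    rw [hS, volume_pi_pi, ← Finset.mul_prod_erase _ _ (Finset.mem_univ i), mul_comm]
    simp only [if_true]
    congr 1
    rw [Finset.prod_congr rfl (g := fun _ => volume B)]
    · simp [Finset.card_erase_of_mem]
    · intro j hj; rw [if_neg (Finset.ne_of_mem_erase hj)]
  have hSm : ∀ i, MeasurableSet (S i) := fun i => MeasurableSet.univ_pi fun j => by
    split_ifs
    · exact hB.diff hK
    · exact hB
  have hSi : ∀ i, ∫⁻ x in S i, ENNReal.ofReal |(Matrix.of x).det| ≤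
      ENNReal.ofReal ((m.factorial : ℝ) * r ^ m) * (volume B ^ (m - 1) * volume (B \ K)) := by
    intro i
    rw [← hSv i, ← setLIntegral_const]
    apply setLIntegral_mono' (hSm i)
    intro x hx
    apply ENNReal.ofReal_le_ofReal
    apply det_bound hr
    intro j
    have := hx j trivial
    by_cases hj : j = i
    · simp only [hj, if_true] at this; rw [hj]; exact this.1
    · simpa only [hj, if_false] using this
  calc detI B ≤ ∫⁻ x in Set.univ.pi (fun _ : Fin m => K) ∪ ⋃ i, S i, ENNReal.ofReal |(Matrix.of x).det| :=
        lintegral_mono_set hsub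
    _ ≤ detI K + ∫⁻ x in ⋃ i, S i, ENNReal.ofReal |(Matrix.of x).det| := lintegral_union_le _ _ _
    _ ≤ detI K + ∑ i, ∫⁻ x in S i, ENNReal.ofReal |(Matrix.of x).det| := by
        gcongr
        refine (lintegral_iUnion_le _ _).trans ?_
        rw [tsum_fintype]
    _ ≤ _ := by
        gcongr
        refine (Finset.sum_le_sum fun i _ => hSi i).trans ?_
        simp

lemma detI_ball_le_of_vol {k : ℕ} {K : Set (Fin (k+1) → ℝ)} (hK : MeasurableSet K) {R r : ℝ} (hr : 0 < r)
    (hKR : K ⊆ sqBall (k+1) R) (hR : 0 ≤ R) (hvol : volume K = volume (sqBall (k+1) r)) :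
    detI (sqBall (k+1) r) ≤ detI K := by
  have hKR' : K ⊆ sqBall (k+1) (max r R) := fun x hx => le_trans (α := ℝ) (hKR hx) (by gcongr; exact le_max_right _ _)
  set c : ℝ≥0∞ := ((k+1 : ℕ) : ℝ≥0∞) * (ENNReal.ofReal (((k+1).factorial : ℝ) * r ^ (k+1)) *
      (volume (sqBall (k+1) r) ^ (k + 1 - 1))) with hc
  have hct : c ≠ ⊤ := by
    apply ENNReal.mul_ne_top (by simp)
    apply ENNReal.mul_ne_top ENNReal.ofReal_ne_top
    exact ENNReal.pow_ne_top (vol_sqBall_ne_top r hr.le)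
  have hall : ∀ ε : ℝ, 0 < ε → detI (sqBall (k+1) r) ≤ detI K + c * ENNReal.ofReal ε := by
    intro ε hε
    obtain ⟨K', hK', hd, hlt⟩ := approx_ball hK hr (le_max_left r R) hKR' hvol hε
    refine (detI_ball_le hK' hr.le).trans ?_
    rw [hc, mul_assoc, mul_assoc]
    gcongr
    rw [← ofReal_measureReal (measure_ne_top_of_subset Set.sdiff_subset (vol_sqBall_ne_top r hr.le))]
    exact ENNReal.ofReal_le_ofReal hlt.le
  have hlim : Filter.Tendsto (fun ε : ℝ => detI K + c * ENNReal.ofReal ε) (nhdsWithin 0 (Set.Ioi 0)) (nhds (detI K)) := by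
    have h1 : Filter.Tendsto (fun ε : ℝ => ENNReal.ofReal ε) (nhdsWithin 0 (Set.Ioi 0)) (nhds 0) := by
      have := (ENNReal.continuous_ofReal.tendsto 0).mono_left (nhdsWithin_le_nhds (s := Set.Ioi (0:ℝ)))
      simpa using this
    have h2 := ENNReal.Tendsto.const_mul h1 (Or.inr hct)
    rw [mul_zero] at h2
    have h3 := (tendsto_const_nhds (x := detI K)).add h2
    simpa using h3
  exact ge_of_tendsto hlim (by filter_upwards [self_mem_nhdsWithin] with ε hε using hall ε hε)

-- Part 6
lemma simplex_eq {m : ℕ} {M : Matrix (Fin m) (Fin m) ℝ} (hM : M.det ≠ 0) {K : Set (Fin m → ℝ)}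
    (h : K = (fun x => M.mulVec x) ⁻¹' (sqBall m 1)) :
    detI K * volume (sqBall m 1) ^ (m + 1) = detI (sqBall m 1) * volume K ^ (m + 1) := by
  rw [← vol_preimage_mulVec hM (sqBall_meas m 1), ← detI_linear hM (sqBall_meas m 1), ← h]
  ring

lemma sqBall_scale {m : ℕ} {r : ℝ} (hr : 0 < r) :
    (r⁻¹ • (1 : Matrix (Fin m) (Fin m) ℝ)).det ≠ 0 ∧
    sqBall m r = (fun x => (r⁻¹ • (1 : Matrix (Fin m) (Fin m) ℝ)).mulVec x) ⁻¹' (sqBall m 1) := by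
  constructor
  · rw [Matrix.det_smul, Matrix.det_one, mul_one]; positivity
  · ext x
    simp only [sqBall, Set.mem_preimage, Set.mem_ofPred_eq, Matrix.smul_mulVec, Matrix.one_mulVec,
      Pi.smul_apply, smul_eq_mul, mul_pow, ← Finset.mul_sum]
    rw [inv_pow, inv_mul_le_iff₀ (by positivity)]
    simp

lemma vol_sqBall_pow {k : ℕ} {r : ℝ} (hr : 0 ≤ r) :
    volume (sqBall (k+1) r) = ENNReal.ofReal (r ^ (k+1)) * volume (sqBall (k+1) 1) := by
  rw [vol_sqBall r hr, vol_sqBall 1 zero_le_one, Measure.addHaar_closedBall _ _ hr,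
    Measure.addHaar_closedBall _ _ zero_le_one]
  simp

lemma simplex_bdd {k : ℕ} {K : Set (Fin (k+1) → ℝ)} (hK : MeasurableSet K) {R : ℝ} (hR : 0 ≤ R)
    (hKR : K ⊆ sqBall (k+1) R) :
    detI (sqBall (k+1) 1) * volume K ^ (k+1+1) ≤ detI K * volume (sqBall (k+1) 1) ^ (k+1+1) := by
  by_cases h0 : volume K = 0
  · rw [h0]; simp
  have hb0 : volume (sqBall (k+1) 1) ≠ 0 := vol_sqBall_ne_zero 1 zero_lt_one
  have hbt : volume (sqBall (k+1) 1) ≠ ⊤ := vol_sqBall_ne_top 1 zero_le_one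
  have hKt : volume K ≠ ⊤ := measure_ne_top_of_subset hKR (vol_sqBall_ne_top R hR)
  set v := (volume K / volume (sqBall (k+1) 1)).toReal with hv
  have hqt : volume K / volume (sqBall (k+1) 1) ≠ ⊤ := (ENNReal.div_lt_top hKt hb0).ne
  have hv0 : 0 < v := ENNReal.toReal_pos (ENNReal.div_ne_zero.2 ⟨h0, hbt⟩) hqt
  set r := v ^ (((k+1 : ℕ) : ℝ)⁻¹) with hr
  have hr0 : 0 < r := Real.rpow_pos_of_pos hv0 _
  have hrp : r ^ (k+1) = v := Real.rpow_inv_natCast_pow hv0.le (by omega)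
  have hvol : volume K = volume (sqBall (k+1) r) := by
    rw [vol_sqBall_pow hr0.le, hrp, hv, ENNReal.ofReal_toReal hqt, ENNReal.div_mul_cancel hb0 hbt]
  have hle := detI_ball_le_of_vol hK hr0 hKR hR hvol
  obtain ⟨hd, he⟩ := sqBall_scale (m := k+1) hr0
  have := simplex_eq hd he
  rw [hvol, ← this]
  gcongr

theorem simplex_ineq {k : ℕ} {K : Set (Fin (k+1) → ℝ)} (hK : MeasurableSet K) :
    detI (sqBall (k+1) 1) * volume K ^ (k+1+1) ≤ detI K * volume (sqBall (k+1) 1) ^ (k+1+1) := by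
  by_cases h0 : volume K = 0
  · rw [h0]; simp
  have hU : (⋃ N : ℕ, K ∩ sqBall (k+1) N) = K := by
    rw [← Set.inter_iUnion]
    apply Set.inter_eq_left.2
    intro x _
    obtain ⟨N, hN⟩ := exists_nat_ge (Real.sqrt (∑ i, x i ^ 2))
    refine Set.mem_iUnion.2 ⟨N, ?_⟩
    exact (Real.sqrt_le_left (by positivity)).1 hN
  have hmono : Monotone fun N : ℕ => K ∩ sqBall (k+1) N := by
    intro a b hab
    apply Set.inter_subset_inter_right
    intro x hx
    exact le_trans (α := ℝ) hx (by gcongr)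
  have ht := tendsto_measure_iUnion_atTop (μ := (volume : Measure (Fin (k+1) → ℝ))) hmono
  rw [hU] at ht
  have ht2 := ENNReal.Tendsto.const_mul (a := detI (sqBall (k+1) 1)) (ENNReal.Tendsto.pow (n := k+1+1) ht) (Or.inl (pow_ne_zero _ h0))
  refine le_of_tendsto ht2 (Filter.Eventually.of_forall fun N => ?_)
  refine (simplex_bdd (hK.inter (sqBall_meas _ _)) (Nat.cast_nonneg N) Set.inter_subset_right).trans ?_
  gcongr
  exact detI_mono Set.inter_subset_left

lemma ellipsoid {m : ℕ} (a : Fin m → ℝ) : ∃ M : Matrix (Fin m) (Fin m) ℝ, M.det = Real.sqrt (1 + ∑ i, a i ^ 2) ∧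
    {y : Fin m → ℝ | ∑ i, y i ^ 2 + (∑ i, a i * y i) ^ 2 ≤ 1} = (fun x => M.mulVec x) ⁻¹' (sqBall m 1) := by
  set s := ∑ i, a i ^ 2 with hs
  have hs0 : 0 ≤ s := Finset.sum_nonneg fun i _ => sq_nonneg _
  set q := Real.sqrt (1 + s) with hq
  have hq2 : q ^ 2 = 1 + s := Real.sq_sqrt (by linarith)
  have hq0 : 0 ≤ q := Real.sqrt_nonneg _
  set β := 1 / (1 + q) with hβ
  have hβe : 2 * β + β ^ 2 * s = 1 := by
    have : s = q ^ 2 - 1 := by linarith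
    rw [this, hβ]; field_simp; ring
  have hmv : ∀ y i, (1 + β • Matrix.vecMulVec a a : Matrix (Fin m) (Fin m) ℝ).mulVec y i = y i + β * (∑ j, a j * y j) * a i := by
    intro y i
    rw [Matrix.add_mulVec, Matrix.one_mulVec, Pi.add_apply, Matrix.smul_mulVec, Pi.smul_apply]
    simp only [Matrix.mulVec, dotProduct, Matrix.vecMulVec_apply, smul_eq_mul, mul_assoc]
    rw [← Finset.mul_sum]; ring
  have hsq : ∀ y : Fin m → ℝ, ∑ i, (1 + β • Matrix.vecMulVec a a : Matrix (Fin m) (Fin m) ℝ).mulVec y i ^ 2 =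
      ∑ i, y i ^ 2 + (∑ i, a i * y i) ^ 2 := by
    intro y
    set p := ∑ j, a j * y j with hp
    have : ∀ i, (1 + β • Matrix.vecMulVec a a : Matrix (Fin m) (Fin m) ℝ).mulVec y i ^ 2 =
        y i ^ 2 + (2 * β * p) * (a i * y i) + (β * p) ^ 2 * a i ^ 2 := by
      intro i; rw [hmv]; ring
    simp_rw [this]
    rw [Finset.sum_add_distrib, Finset.sum_add_distrib, ← Finset.mul_sum, ← Finset.mul_sum, ← hp, ← hs]
    linear_combination p ^ 2 * hβe
  refine ⟨1 + β • Matrix.vecMulVec a a, ?_, ?_⟩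
  · have h1 : Matrix.replicateCol Unit (β • a) * Matrix.replicateRow Unit a = β • Matrix.vecMulVec a a := by
      ext i j; simp [Matrix.mul_apply, Matrix.vecMulVec_apply, mul_assoc]
    rw [← h1, Matrix.det_one_add_replicateCol_mul_replicateRow]
    have h2 : dotProduct a (β • a) = β * s := by
      simp only [dotProduct, Pi.smul_apply, smul_eq_mul, hs, Finset.mul_sum]
      exact Finset.sum_congr rfl fun i _ => by ring
    have h3 : s = q ^ 2 - 1 := by linarith
    rw [h2, h3, hβ]; field_simp; ring
  · ext y
    simp only [sqBall, Set.mem_preimage, Set.mem_ofPred_eq, hsq]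
    norm_num

-- Part 7
lemma det_zero_null {m : ℕ} : volume {x : Fin m → Fin m → ℝ | (Matrix.of x).det = 0} = 0 := by
  set Z := {x : Fin m → Fin m → ℝ | (Matrix.of x).det = 0} with hZ
  have hZm : MeasurableSet Z := measurable_det (measurableSet_singleton 0)
  set e : Fin m → Fin m → ℝ := fun i j => (1 : Matrix (Fin m) (Fin m) ℝ) i j with he
  have hfun : Measurable fun p : ℝ × (Fin m → Fin m → ℝ) => Z.indicator (1 : (Fin m → Fin m → ℝ) → ℝ≥0∞) (p.2 + p.1 • e) :=
    (measurable_one.indicator hZm).comp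
      (show Measurable fun p : ℝ × (Fin m → Fin m → ℝ) => p.2 + p.1 • e by fun_prop)
  have h1 : ∫⁻ s in Set.Icc (0:ℝ) 1, ∫⁻ x : Fin m → Fin m → ℝ, Z.indicator (1 : (Fin m → Fin m → ℝ) → ℝ≥0∞) (x + s • e) = volume Z := by
    have : ∀ s : ℝ, ∫⁻ x : Fin m → Fin m → ℝ, Z.indicator (1 : (Fin m → Fin m → ℝ) → ℝ≥0∞) (x + s • e) = volume Z := by
      intro s
      rw [lintegral_add_right_eq_self (fun x => Z.indicator (1 : (Fin m → Fin m → ℝ) → ℝ≥0∞) x), lintegral_indicator_one hZm]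
    simp [this]
  have h2 : ∫⁻ s in Set.Icc (0:ℝ) 1, ∫⁻ x : Fin m → Fin m → ℝ, Z.indicator (1 : (Fin m → Fin m → ℝ) → ℝ≥0∞) (x + s • e) = 0 := by
    rw [lintegral_lintegral_swap hfun.aemeasurable]
    rw [lintegral_eq_zero_of_ae_eq_zero]
    filter_upwards with x
    have hfin : {s : ℝ | x + s • e ∈ Z}.Finite := by
      have h := Polynomial.finite_setOfPred_isRoot (p := (-(Matrix.of x)).charpoly) (Matrix.charpoly_monic _).ne_zero
      refine h.subset ?_
      intro s hs
      change Polynomial.eval s _ = 0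
      rw [Matrix.eval_charpoly]
      rw [← (show (Matrix.of (x + s • e)).det = 0 from hs)]
      congr 1
      ext i j
      simp [he, Matrix.one_apply, Matrix.scalar_apply, Matrix.diagonal_apply]
      ring
    apply lintegral_eq_zero_of_ae_eq_zero
    apply ae_restrict_of_ae
    have := hfin.measure_zero volume
    rw [← compl_mem_ae_iff] at this
    filter_upwards [this] with s hs
    simp only [Pi.zero_apply]
    exact Set.indicator_of_notMem (s := Z) (f := (1 : (Fin m → Fin m → ℝ) → ℝ≥0∞)) hs
  rw [← h1, h2]

/-- Section of L by a graph hyperplane. -/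
def gsec {m : ℕ} (L : Set (Fin (m+1) → ℝ)) (a : Fin m → ℝ) : Set (Fin m → ℝ) :=
  {y | Fin.cons (∑ i, a i * y i) y ∈ L}

lemma gsec_meas2 {m : ℕ} {L : Set (Fin (m+1) → ℝ)} (hL : MeasurableSet L) :
    MeasurableSet {p : (Fin m → ℝ) × (Fin m → ℝ) | p.2 ∈ gsec L p.1} := by
  have : Measurable fun p : (Fin m → ℝ) × (Fin m → ℝ) => (p.2, ∑ i, p.1 i * p.2 i) := by fun_prop
  exact (measurable_cons.comp this) hL

lemma gsec_meas {m : ℕ} {L : Set (Fin (m+1) → ℝ)} (hL : MeasurableSet L) (a : Fin m → ℝ) :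
    MeasurableSet (gsec L a) :=
  measurable_prodMk_left (gsec_meas2 hL)

lemma vol_gsec_meas {m : ℕ} {L : Set (Fin (m+1) → ℝ)} (hL : MeasurableSet L) :
    Measurable fun a => volume (gsec L a) :=
  measurable_measure_prodMk_left (gsec_meas2 hL)

theorem blaschke {m : ℕ} {L : Set (Fin (m+1) → ℝ)} (hL : MeasurableSet L) :
    volume L ^ m = ∫⁻ a, detI (gsec L a) := by
  have hS : MeasurableSet (Set.univ.pi fun _ : Fin m => L) := MeasurableSet.univ_pi fun _ => hL
  have hT : MeasurableSet {p : (Fin m → ℝ) × (Fin m → Fin m → ℝ) | ∀ i, p.2 i ∈ gsec L p.1} := by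
    rw [show {p : (Fin m → ℝ) × (Fin m → Fin m → ℝ) | ∀ i, p.2 i ∈ gsec L p.1} =
      ⋂ i, {p : (Fin m → ℝ) × (Fin m → Fin m → ℝ) | p.2 i ∈ gsec L p.1} by ext; simp]
    refine MeasurableSet.iInter fun i => ?_
    have : Measurable fun p : (Fin m → ℝ) × (Fin m → Fin m → ℝ) => (p.1, p.2 i) := by fun_prop
    exact this (gsec_meas2 hL)
  have e0 : volume L ^ m = volume (Set.univ.pi fun _ : Fin m => L) := by
    rw [volume_pi_pi]; simp
  have e1 : ∀ a, detI (gsec L a) = ∫⁻ y : Fin m → Fin m → ℝ,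
      {p : (Fin m → ℝ) × (Fin m → Fin m → ℝ) | ∀ i, p.2 i ∈ gsec L p.1}.indicator
        (fun p => ENNReal.ofReal |(Matrix.of p.2).det|) (a, y) := by
    intro a
    unfold detI
    rw [← lintegral_indicator (MeasurableSet.univ_pi fun _ => gsec_meas hL a)]
    congr 1; ext y
    by_cases h : ∀ i, y i ∈ gsec L a
    · rw [Set.indicator_of_mem (by exact fun i _ => h i), Set.indicator_of_mem (by exact h)]
    · rw [Set.indicator_of_notMem (by exact fun h' => h fun i => h' i trivial), Set.indicator_of_notMem (by exact h)]
  simp_rw [e1]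
  rw [lintegral_lintegral_swap]
  swap
  · exact (((measurable_det.comp measurable_snd).abs.ennreal_ofReal).indicator hT).aemeasurable
  rw [e0, ← lintegral_indicator_one hS, lintegral_split (measurable_one.indicator hS)]
  apply lintegral_congr_ae
  have hnull : ∀ᵐ x : Fin m → Fin m → ℝ, (Matrix.of x).det ≠ 0 := by
    have := det_zero_null (m := m)
    rw [← compl_mem_ae_iff] at this
    exact this
  filter_upwards [hnull] with y hy
  have hSy : MeasurableSet {t : Fin m → ℝ | ∀ i, (Fin.cons (t i) (y i) : Fin (m+1) → ℝ) ∈ L} := by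
    rw [show {t : Fin m → ℝ | ∀ i, (Fin.cons (t i) (y i) : Fin (m+1) → ℝ) ∈ L} =
      ⋂ i, (fun t : Fin m → ℝ => t i) ⁻¹' (fib L (y i)) by ext; simp [fib]]
    exact MeasurableSet.iInter fun i => (measurable_pi_apply i) (fib_meas hL _)
  have l1 : ∫⁻ t : Fin m → ℝ, (Set.univ.pi fun _ : Fin m => L).indicator (1 : (Fin m → Fin (m+1) → ℝ) → ℝ≥0∞) (fun i => Fin.cons (t i) (y i))
      = volume {t : Fin m → ℝ | ∀ i, (Fin.cons (t i) (y i) : Fin (m+1) → ℝ) ∈ L} := by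
    rw [← lintegral_indicator_one hSy]
    congr 1; ext t
    by_cases h : ∀ i, (Fin.cons (t i) (y i) : Fin (m+1) → ℝ) ∈ L
    · rw [Set.indicator_of_mem (by exact fun i _ => h i), Set.indicator_of_mem (by exact h)]; rfl
    · rw [Set.indicator_of_notMem (by exact fun h' => h fun i => h' i trivial), Set.indicator_of_notMem (by exact h)]
  have hA : MeasurableSet {a : Fin m → ℝ | ∀ i, y i ∈ gsec L a} := by
    exact (measurable_prodMk_right (y := y)) hT
  have l2 : ∫⁻ a, {p : (Fin m → ℝ) × (Fin m → Fin m → ℝ) | ∀ i, p.2 i ∈ gsec L p.1}.indicator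
        (fun p => ENNReal.ofReal |(Matrix.of p.2).det|) (a, y) =
      ENNReal.ofReal |(Matrix.of y).det| * volume {a : Fin m → ℝ | ∀ i, y i ∈ gsec L a} := by
    rw [← lintegral_indicator_const hA]
    congr 1
  rw [l1, l2, ← vol_preimage_mulVec hy hSy]
  congr 2
  ext a
  simp [gsec, Matrix.mulVec, dotProduct, mul_comm]

-- Part 8
theorem graph_ineq {k : ℕ} {L : Set (Fin (k+1+1) → ℝ)} (hL : MeasurableSet L) :
    detI (sqBall (k+1) 1) * ∫⁻ a, volume (gsec L a) ^ (k+1+1) ≤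
      volume L ^ (k+1) * volume (sqBall (k+1) 1) ^ (k+1+1) := by
  rw [blaschke hL]
  rw [← lintegral_mul_const' _ _ (ENNReal.pow_ne_top (vol_sqBall_ne_top 1 zero_le_one)),
    ← lintegral_const_mul _ ((vol_gsec_meas hL).pow_const _)]
  exact lintegral_mono fun a => simplex_ineq (gsec_meas hL a)

lemma gsec_ball {m : ℕ} (a : Fin m → ℝ) :
    gsec (sqBall (m+1) 1) a = {y : Fin m → ℝ | ∑ i, y i ^ 2 + (∑ i, a i * y i) ^ 2 ≤ 1} := by
  ext y
  simp [gsec, sqBall, Fin.sum_univ_succ, add_comm]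

theorem graph_eq {k : ℕ} :
    detI (sqBall (k+1) 1) * ∫⁻ a, volume (gsec (sqBall (k+1+1) 1) a) ^ (k+1+1) =
      volume (sqBall (k+1+1) 1) ^ (k+1) * volume (sqBall (k+1) 1) ^ (k+1+1) := by
  have hL := sqBall_meas (k+1+1) 1
  rw [blaschke hL, ← lintegral_mul_const' _ _ (ENNReal.pow_ne_top (vol_sqBall_ne_top 1 zero_le_one)),
    ← lintegral_const_mul _ ((vol_gsec_meas hL).pow_const _)]
  congr 1; ext a
  obtain ⟨M, hM, he⟩ := ellipsoid a
  rw [← gsec_ball] at he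
  refine (simplex_eq (M := M) ?_ he).symm
  rw [hM]
  have := Finset.sum_nonneg fun i (_ : i ∈ Finset.univ) => sq_nonneg (a i)
  positivity

-- Part 9
/-- hslope of the hyperplane orthogonal to `w`. -/
noncomputable def hslope {m : ℕ} (w : Fin (m+1) → ℝ) : Fin m → ℝ := fun i => -(w i.succ) / w 0

lemma sqrt_hslope {m : ℕ} {w : Fin (m+1) → ℝ} (h0 : w 0 ≠ 0) (h1 : ∑ i, w i ^ 2 = 1) :
    Real.sqrt (1 + ∑ i, hslope w i ^ 2) = |w 0|⁻¹ := by
  rw [Real.sqrt_eq_iff_eq_sq (add_nonneg zero_le_one (Finset.sum_nonneg fun i _ => sq_nonneg _)) (by positivity)]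
  rw [Fin.sum_univ_succ] at h1
  simp only [hslope, div_pow, neg_sq]
  rw [← Finset.sum_div, inv_pow, sq_abs]
  field_simp
  exact h1

lemma vol_gsec_ball {m : ℕ} (a : Fin m → ℝ) :
    ENNReal.ofReal (Real.sqrt (1 + ∑ i, a i ^ 2)) * volume (gsec (sqBall (m+1) 1) a) = volume (sqBall m 1) := by
  obtain ⟨M, hM, he⟩ := ellipsoid a
  have h0 : 0 < M.det := by
    rw [hM]
    have := Finset.sum_nonneg fun i (_ : i ∈ Finset.univ) => sq_nonneg (a i)
    positivity
  rw [gsec_ball, he, ← hM, ← vol_preimage_mulVec h0.ne' (sqBall_meas m 1), abs_of_pos h0]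

lemma vol_closedBall_orth {k : ℕ} {w : EuclideanSpace ℝ (Fin (k+1+1))} (hw : w ≠ 0) :
    volume {y : ((ℝ ∙ w)ᗮ) | (y : EuclideanSpace ℝ (Fin (k+1+1))) ∈ closedBall (0 : EuclideanSpace ℝ (Fin (k+1+1))) 1} =
      volume (sqBall (k+1) 1) := by
  have : Fact (Module.finrank ℝ (EuclideanSpace ℝ (Fin (k+1+1))) = k + 1 + 1) := ⟨by simp⟩
  have hf : Module.finrank ℝ ((ℝ ∙ w)ᗮ) = k + 1 := Submodule.finrank_orthogonal_span_singleton hw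
  have hnt : Nontrivial ((ℝ ∙ w)ᗮ) := Module.nontrivial_of_finrank_pos (R := ℝ) (by omega)
  have e : {y : ((ℝ ∙ w)ᗮ) | (y : EuclideanSpace ℝ (Fin (k+1+1))) ∈ closedBall (0 : EuclideanSpace ℝ (Fin (k+1+1))) 1} =
      closedBall 0 1 := by ext y; simp
  rw [e, InnerProductSpace.volume_closedBall, vol_sqBall 1 zero_le_one, InnerProductSpace.volume_closedBall, hf]
  simp

theorem section_vol {k : ℕ} {L : Set (EuclideanSpace ℝ (Fin (k+1+1)))} (hL : MeasurableSet L)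
    {w : EuclideanSpace ℝ (Fin (k+1+1))} (hw : ‖w‖ = 1) (h0 : w 0 ≠ 0) :
    volume {y : ((ℝ ∙ w)ᗮ) | (y : EuclideanSpace ℝ (Fin (k+1+1))) ∈ L} =
      ENNReal.ofReal (|w 0|⁻¹) * volume (gsec (WithLp.toLp 2 ⁻¹' L) (hslope w)) := by
  have : Fact (Module.finrank ℝ (EuclideanSpace ℝ (Fin (k+1+1))) = k + 1 + 1) := ⟨by simp⟩
  have hw0 : w ≠ 0 := by intro h; rw [h] at h0; simp at h0
  have hf : Module.finrank ℝ ((ℝ ∙ w)ᗮ) = k + 1 := Submodule.finrank_orthogonal_span_singleton hw0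
  have hws : ∑ i, w i ^ 2 = 1 := by
    have := EuclideanSpace.norm_sq_eq w
    rw [hw] at this; simpa using this.symm
  -- the projection
  let f : ((ℝ ∙ w)ᗮ) →ₗ[ℝ] (Fin (k+1) → ℝ) :=
    { toFun := fun y i => (y : EuclideanSpace ℝ (Fin (k+1+1))) i.succ
      map_add' := fun _ _ => rfl
      map_smul' := fun _ _ => rfl }
  have hfa : ∀ y i, f y i = (y : EuclideanSpace ℝ (Fin (k+1+1))) i.succ := fun _ _ => rfl
  have horth : ∀ y : ((ℝ ∙ w)ᗮ), (y : EuclideanSpace ℝ (Fin (k+1+1))) 0 = ∑ i, hslope w i * f y i := by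
    intro y
    have h := Submodule.mem_orthogonal_singleton_iff_inner_right.1 y.2
    rw [PiLp.inner_apply, Fin.sum_univ_succ] at h
    simp only [RCLike.inner_apply, conj_trivial] at h
    simp only [hslope, hfa, neg_div, neg_mul, Finset.sum_neg_distrib, div_mul_eq_mul_div]
    rw [← Finset.sum_div, ← neg_div, eq_div_iff h0]
    have : ∑ i : Fin (k+1), w i.succ * (y : EuclideanSpace ℝ (Fin (k+1+1))) i.succ =
        ∑ i : Fin (k+1), (y : EuclideanSpace ℝ (Fin (k+1+1))) i.succ * w i.succ :=
      Finset.sum_congr rfl fun i _ => mul_comm _ _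
    rw [this]; linarith
  have hcons : ∀ y : ((ℝ ∙ w)ᗮ), (y : EuclideanSpace ℝ (Fin (k+1+1))) =
      WithLp.toLp 2 (Fin.cons (∑ i, hslope w i * f y i) (f y)) := by
    intro y
    ext j
    refine Fin.cases ?_ (fun i => ?_) j
    · simpa using horth y
    · simp [hfa]
  have hinj : Function.Injective f := by
    intro y z hyz
    apply Subtype.ext
    rw [hcons y, hcons z, hyz]
  let Φ : ((ℝ ∙ w)ᗮ) ≃L[ℝ] (Fin (k+1) → ℝ) :=
    (LinearMap.linearEquivOfInjective f hinj (by rw [hf]; simp)).toContinuousLinearEquiv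
  have hΦ : ∀ y, Φ y = f y := fun y => rfl
  have hΦm : Measurable Φ := Φ.continuous.measurable
  obtain ⟨c, hc⟩ : ∃ c : ℝ≥0, Measure.map Φ volume = c • (volume : Measure (Fin (k+1) → ℝ)) :=
    ⟨_, Measure.isAddLeftInvariant_eq_smul _ _⟩
  have key : ∀ {S : Set (EuclideanSpace ℝ (Fin (k+1+1)))}, MeasurableSet S →
      volume {y : ((ℝ ∙ w)ᗮ) | (y : EuclideanSpace ℝ (Fin (k+1+1))) ∈ S} =
        (c : ℝ≥0∞) * volume (gsec (WithLp.toLp 2 ⁻¹' S) (hslope w)) := by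
    intro S hS
    have hS' : MeasurableSet ((WithLp.toLp 2 : (Fin (k+1+1) → ℝ) → EuclideanSpace ℝ (Fin (k+1+1))) ⁻¹' S) :=
      (PiLp.volume_preserving_toLp (Fin (k+1+1))).measurable hS
    have e := Measure.map_apply (μ := (volume : Measure ((ℝ ∙ w)ᗮ))) hΦm (gsec_meas hS' (hslope w))
    rw [hc] at e
    rw [show {y : ((ℝ ∙ w)ᗮ) | (y : EuclideanSpace ℝ (Fin (k+1+1))) ∈ S} =
      Φ ⁻¹' (gsec (WithLp.toLp 2 ⁻¹' S) (hslope w)) from ?_, ← e]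
    · rfl
    · ext y
      change (y : EuclideanSpace ℝ (Fin (k+1+1))) ∈ S ↔ WithLp.toLp 2 (Fin.cons (∑ i, hslope w i * f y i) (f y)) ∈ S
      rw [← hcons y]
  have hb := key (S := closedBall 0 1) measurableSet_closedBall
  rw [vol_closedBall_orth hw0, ← sqBall_eq 1 zero_le_one] at hb
  have hb2 := vol_gsec_ball (hslope w)
  rw [sqrt_hslope h0 hws] at hb2
  have hbt : volume (sqBall (k+1) 1) ≠ ⊤ := vol_sqBall_ne_top 1 zero_le_one
  have hbz : volume (sqBall (k+1) 1) ≠ 0 := vol_sqBall_ne_zero 1 zero_lt_one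
  rw [key hL]
  congr 1
  rw [hb] at hb2
  have g0 : volume (gsec (sqBall (k+1+1) 1) (hslope w)) ≠ 0 := by
    intro h; rw [h, mul_zero] at hb; exact hbz hb
  have gt : volume (gsec (sqBall (k+1+1) 1) (hslope w)) ≠ ⊤ := by
    intro h; rw [h, ENNReal.mul_top] at hb2
    · rw [h, ← hb2] at hb; exact hbt hb
    · simpa using h0
  exact ((ENNReal.mul_left_inj g0 gt).1 hb2).symm

-- Part 10
lemma polar {n : ℕ} {H : EuclideanSpace ℝ (Fin (n+1)) → ℝ≥0∞} (hH : Measurable H) :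
    ∫⁻ x, H x = ∫⁻ w : sphere (0 : EuclideanSpace ℝ (Fin (n+1))) 1, ∫⁻ r : Set.Ioi (0:ℝ),
      H (r.1 • (w : EuclideanSpace ℝ (Fin (n+1)))) ∂(Measure.volumeIoiPow n)
      ∂(volume : Measure (EuclideanSpace ℝ (Fin (n+1)))).toSphere := by
  have h := (volume : Measure (EuclideanSpace ℝ (Fin (n+1)))).measurePreserving_homeomorphUnitSphereProd
  have hm : Measurable fun p : sphere (0 : EuclideanSpace ℝ (Fin (n+1))) 1 × Set.Ioi (0:ℝ) =>
      H (p.2.1 • (p.1 : EuclideanSpace ℝ (Fin (n+1)))) := by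
    apply hH.comp
    fun_prop
  have h2 := h.lintegral_comp hm
  rw [lintegral_prod _ hm.aemeasurable] at h2
  simp only [finrank_euclideanSpace, Fintype.card_fin, Nat.add_sub_cancel] at h2
  rw [← h2]
  conv_lhs => rw [← restrict_compl_singleton (μ := volume) (0 : EuclideanSpace ℝ (Fin (n+1)))]
  rw [← lintegral_subtype_comap (measurableSet_singleton _).compl]
  apply lintegral_congr
  intro x
  congr 1
  have hx : ‖x.1‖ ≠ 0 := norm_ne_zero_iff.2 x.2
  simp [smul_smul, mul_inv_cancel₀ hx]

lemma lintegral_smul_pi {m : ℕ} {ψ : (Fin m → ℝ) → ℝ≥0∞} (hψ : Measurable ψ) {c : ℝ} (hc : c ≠ 0) :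
    ∫⁻ y, ψ (c • y) = ENNReal.ofReal |(c ^ m)⁻¹| * ∫⁻ y, ψ y := by
  have h := Measure.map_addHaar_smul (volume : Measure (Fin m → ℝ)) hc
  rw [← lintegral_map hψ (measurable_const_smul c), h, lintegral_smul_measure]
  simp

lemma hslope_meas {m : ℕ} : Measurable (hslope : (Fin (m+1) → ℝ) → Fin m → ℝ) := by
  unfold hslope
  rw [measurable_pi_iff]
  intro i
  exact ((measurable_pi_apply _).neg).div (measurable_pi_apply _)

lemma sphere_null {m : ℕ} : ∀ᵐ w : sphere (0 : EuclideanSpace ℝ (Fin (m+1))) 1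
    ∂(volume : Measure (EuclideanSpace ℝ (Fin (m+1)))).toSphere, (w : EuclideanSpace ℝ (Fin (m+1))) 0 ≠ 0 := by
  have hm : MeasurableSet {w : sphere (0 : EuclideanSpace ℝ (Fin (m+1))) 1 | (w : EuclideanSpace ℝ (Fin (m+1))) 0 = 0} := by
    have : Measurable fun w : sphere (0 : EuclideanSpace ℝ (Fin (m+1))) 1 => (w : EuclideanSpace ℝ (Fin (m+1))) 0 := by
      fun_prop
    exact this (measurableSet_singleton 0)
  have hz : volume {x : EuclideanSpace ℝ (Fin (m+1)) | x 0 = 0} = 0 := by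
    have := (PiLp.volume_preserving_ofLp (Fin (m+1))).measure_preimage
      (s := {x : Fin (m+1) → ℝ | x 0 = 0}) (measurableSet_eq_fun (measurable_pi_apply _) measurable_const).nullMeasurableSet
    change volume (WithLp.ofLp ⁻¹' {x : Fin (m+1) → ℝ | x 0 = 0}) = 0
    rw [this, vol_fib (measurableSet_eq_fun (measurable_pi_apply _) measurable_const)]
    simp [fib]
  rw [ae_iff]
  simp only [ne_eq, not_not]
  rw [Measure.toSphere_apply' _ hm]
  rw [measure_mono_null _ hz, mul_zero]
  rintro _ ⟨r, -, _, ⟨w, hw, rfl⟩, rfl⟩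
  simp only [Set.mem_ofPred_eq] at hw ⊢
  simp [hw]

theorem sphere_graph {m : ℕ} : ∃ C : ℝ≥0∞, ∀ ψ : (Fin m → ℝ) → ℝ≥0∞, Measurable ψ →
    ∫⁻ w : sphere (0 : EuclideanSpace ℝ (Fin (m+1))) 1,
      ENNReal.ofReal (|(w : EuclideanSpace ℝ (Fin (m+1))) 0|⁻¹) ^ (m+1) * ψ (hslope (w : EuclideanSpace ℝ (Fin (m+1))))
      ∂(volume : Measure (EuclideanSpace ℝ (Fin (m+1)))).toSphere = C * ∫⁻ a, ψ a := by
  set c₀ : ℝ≥0∞ := ∫⁻ t in Set.Ioo (-1:ℝ) 1, ENNReal.ofReal (|t| ^ m) with hc₀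
  refine ⟨(m+1 : ℕ) * c₀, fun ψ hψ => ?_⟩
  have hS : MeasurableSet {x : Fin (m+1) → ℝ | |x 0| < 1} :=
    measurableSet_lt (measurable_pi_apply 0).abs measurable_const
  set G : (Fin (m+1) → ℝ) → ℝ≥0∞ := fun x => {x : Fin (m+1) → ℝ | |x 0| < 1}.indicator (fun x => ψ (hslope x)) x with hG
  have hGm : Measurable G := (hψ.comp hslope_meas).indicator hS
  have hof : Measurable (WithLp.ofLp : EuclideanSpace ℝ (Fin (m+1)) → Fin (m+1) → ℝ) :=
    (PiLp.volume_preserving_ofLp (Fin (m+1))).measurable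
  -- cartesian side
  have h1 : ∫⁻ x : EuclideanSpace ℝ (Fin (m+1)), G (WithLp.ofLp x) = c₀ * ∫⁻ a, ψ a := by
    rw [(PiLp.volume_preserving_ofLp (Fin (m+1))).lintegral_comp hGm, lintegral_split1 hGm,
      lintegral_lintegral_swap (f := fun y t => G (Fin.cons t y)) ((hGm.comp measurable_cons).aemeasurable)]
    rw [hc₀, ← lintegral_indicator measurableSet_Ioo, ← lintegral_mul_const]
    swap
    · exact Measurable.indicator (by fun_prop) measurableSet_Ioo
    apply lintegral_congr_ae
    have : ∀ᵐ t : ℝ, t ≠ 0 := by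
      rw [ae_iff]; simp
    filter_upwards [this] with t ht
    by_cases h : |t| < 1
    · have e : ∀ y : Fin m → ℝ, G (Fin.cons t y) = ψ ((-t⁻¹) • y) := by
        intro y
        rw [hG]
        simp only
        rw [Set.indicator_of_mem (by simpa using h)]
        congr 1; ext i; simp [hslope]; field_simp
      simp_rw [e]
      rw [lintegral_smul_pi hψ (by simpa using ht), Set.indicator_of_mem (by exact abs_lt.1 h)]
      congr 2
      rw [abs_inv, abs_pow, abs_neg, abs_inv, inv_pow, inv_inv]
    · have e : ∀ y : Fin m → ℝ, G (Fin.cons t y) = 0 := by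
        intro y
        rw [hG]
        simp only
        rw [Set.indicator_of_notMem (by simpa using h)]
      simp_rw [e]
      rw [Set.indicator_of_notMem (by exact fun h' => h (abs_lt.2 h'))]
      simp
  rw [polar (H := fun x => G (WithLp.ofLp x)) (hGm.comp hof)] at h1
  rw [mul_assoc, ← h1, ← lintegral_const_mul']
  swap
  · simp
  apply lintegral_congr_ae
  filter_upwards [sphere_null] with w hw
  have hpos : 0 < |(w : EuclideanSpace ℝ (Fin (m+1))) 0| := abs_pos.2 hw
  have e : ∀ r : Set.Ioi (0:ℝ), G (WithLp.ofLp (r.1 • (w : EuclideanSpace ℝ (Fin (m+1))))) =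
      (Set.Iio (⟨|(w : EuclideanSpace ℝ (Fin (m+1))) 0|⁻¹, by simpa using hw⟩ : Set.Ioi (0:ℝ))).indicator
        (fun _ => ψ (hslope (w : EuclideanSpace ℝ (Fin (m+1))))) r := by
    intro r
    have hr : (0:ℝ) < r.1 := r.2
    have hsl : hslope (WithLp.ofLp (r.1 • (w : EuclideanSpace ℝ (Fin (m+1))))) = hslope (w : EuclideanSpace ℝ (Fin (m+1))) := by
      ext i; simp [hslope]; field_simp
    have hiff : |(r.1 • (w : EuclideanSpace ℝ (Fin (m+1)))) 0| < 1 ↔ r.1 < |(w : EuclideanSpace ℝ (Fin (m+1))) 0|⁻¹ := by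
      rw [PiLp.smul_apply, smul_eq_mul, abs_mul, abs_of_pos hr, lt_inv_comm₀ hr hpos, ← one_div, lt_div_iff₀ hr, mul_comm]
    simp only [hG]
    by_cases h : r.1 < |(w : EuclideanSpace ℝ (Fin (m+1))) 0|⁻¹
    · rw [Set.indicator_of_mem (by exact hiff.2 h), Set.indicator_of_mem (by exact h), hsl]
    · rw [Set.indicator_of_notMem (by exact fun h' => h (hiff.1 h')), Set.indicator_of_notMem (by exact h)]
  simp_rw [e]
  rw [lintegral_indicator_const measurableSet_Iio, Measure.volumeIoiPow_apply_Iio, mul_comm (ψ _), ← mul_assoc]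
  congr 1
  rw [← ENNReal.ofReal_natCast, ← ENNReal.ofReal_mul (by positivity), ← ENNReal.ofReal_pow (by positivity)]
  congr 1
  push_cast
  field_simp

-- Part 11
lemma ballVol_pos (m : ℕ) : 0 < ballVol m := by
  unfold ballVol
  have := Real.Gamma_pos_of_pos (s := (m : ℝ) / 2 + 1) (by positivity)
  positivity

lemma vol_unit (m : ℕ) : volume (sqBall (m+1) 1) = ENNReal.ofReal (ballVol (m+1)) := by
  rw [vol_sqBall 1 zero_le_one, EuclideanSpace.volume_closedBall]
  simp only [ENNReal.ofReal_one, one_pow, one_mul, Fintype.card_fin, ballVol]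
  congr 2
  rw [Real.sqrt_eq_rpow, ← Real.rpow_natCast, ← Real.rpow_mul Real.pi_pos.le]
  congr 1
  ring

lemma sph_formula {k : ℕ} : ∃ C : ℝ≥0∞, ∀ L : Set (EuclideanSpace ℝ (Fin (k+1+1))), MeasurableSet L →
    (∫⁻ w, (volume {y : ((ℝ ∙ (w : EuclideanSpace ℝ (Fin (k+1+1))))ᗮ) |
        (y : EuclideanSpace ℝ (Fin (k+1+1))) ∈ L}) ^ (k+1+1) ∂(sphMeasure (k+1+1))) =
      C * ∫⁻ a, volume (gsec (WithLp.toLp 2 ⁻¹' L) a) ^ (k+1+1) := by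
  obtain ⟨C, hC⟩ := sphere_graph (m := k+1)
  refine ⟨((volume : Measure (EuclideanSpace ℝ (Fin (k+1+1)))).toSphere Set.univ)⁻¹ * C, fun L hL => ?_⟩
  have hL' : MeasurableSet (WithLp.toLp 2 ⁻¹' L : Set (Fin (k+1+1) → ℝ)) :=
    (PiLp.volume_preserving_toLp (Fin (k+1+1))).measurable hL
  rw [sphMeasure, lintegral_smul_measure, mul_assoc, ← hC _ ((vol_gsec_meas hL').pow_const _), smul_eq_mul]
  congr 1
  apply lintegral_congr_ae
  filter_upwards [sphere_null] with w hw
  rw [section_vol hL (by simpa using w.2) hw, mul_pow]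

lemma sph_prob {k : ℕ} (c : ℝ≥0∞) : ∫⁻ _, c ∂(sphMeasure (k+1+1)) = c := by
  rw [sphMeasure, lintegral_smul_measure, lintegral_const, smul_eq_mul, mul_comm c, ← mul_assoc,
    ENNReal.inv_mul_cancel, one_mul]
  · rw [Ne, Measure.measure_univ_eq_zero]
    exact Measure.toSphere_ne_zero _
  · exact measure_ne_top _ _

/-- The Busemann intersection inequality, case `k = n-1`, for an arbitrary (not necessarily
bounded) star set of finite measure: the central hyperplane sections satisfy
`∫_{S^{n-1}} V_{n-1}(L ∩ w^⊥)^n d*w ≤ (b_{n-1}^n / b_n^{n-1}) V_n(L)^{n-1}`. -/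
theorem stmt12 (n : ℕ) (hn : 2 ≤ n) (L : Set (EuclideanSpace ℝ (Fin n)))
    (hL : MeasurableSet L)
    (hstar : ∀ x ∈ L, ∀ lam : ℝ, 0 ≤ lam → lam ≤ 1 → lam • x ∈ L)
    (hfin : volume L < ⊤) :
    (∫⁻ w, (volume {y : ((ℝ ∙ (w : EuclideanSpace ℝ (Fin n)))ᗮ) |
        (y : EuclideanSpace ℝ (Fin n)) ∈ L}) ^ n ∂(sphMeasure n)) ≤
      ENNReal.ofReal (ballVol (n - 1) ^ n / ballVol n ^ (n - 1)) * volume L ^ (n - 1) := by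
  obtain ⟨k, rfl⟩ : ∃ k, n = k + 1 + 1 := ⟨n - 2, by omega⟩
  obtain ⟨C, hC⟩ := sph_formula (k := k)
  have hL' : MeasurableSet (WithLp.toLp 2 ⁻¹' L : Set (Fin (k+1+1) → ℝ)) :=
    (PiLp.volume_preserving_toLp (Fin (k+1+1))).measurable hL
  have hv : volume (WithLp.toLp 2 ⁻¹' L : Set (Fin (k+1+1) → ℝ)) = volume L :=
    (PiLp.volume_preserving_toLp (Fin (k+1+1))).measure_preimage hL.nullMeasurableSet
  have hB := hC (closedBall 0 1) measurableSet_closedBall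
  have hB1 : ∀ w : sphere (0 : EuclideanSpace ℝ (Fin (k+1+1))) 1,
      volume {y : ((ℝ ∙ (w : EuclideanSpace ℝ (Fin (k+1+1))))ᗮ) |
        (y : EuclideanSpace ℝ (Fin (k+1+1))) ∈ closedBall (0 : EuclideanSpace ℝ (Fin (k+1+1))) 1}
        = volume (sqBall (k+1) 1) := fun w =>
    vol_closedBall_orth (ne_zero_of_mem_unit_sphere w)
  simp_rw [hB1] at hB
  rw [sph_prob, ← sqBall_eq 1 zero_le_one] at hB
  rw [hC L hL]
  have h1 := graph_ineq hL'
  have h2 := graph_eq (k := k)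
  rw [hv] at h1
  have hb0 := vol_sqBall_ne_zero (m := k+1) 1 one_pos
  have hbt := vol_sqBall_ne_top (m := k+1) 1 zero_le_one
  have hc0 := vol_sqBall_ne_zero (m := k+1+1) 1 one_pos
  have hct := vol_sqBall_ne_top (m := k+1+1) 1 zero_le_one
  have hbp := ballVol_pos (k+1+1)
  rw [Nat.add_sub_cancel, ENNReal.ofReal_div_of_pos (by positivity),
    ENNReal.ofReal_pow (ballVol_pos _).le, ENNReal.ofReal_pow (ballVol_pos _).le,
    ← vol_unit, ← vol_unit]
  generalize (∫⁻ a, volume (gsec (WithLp.toLp 2 ⁻¹' L) a) ^ (k+1+1)) = I at *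
  generalize (∫⁻ a, volume (gsec (sqBall (k+1+1) 1) a) ^ (k+1+1)) = J at *
  generalize detI (sqBall (k+1) 1) = D at *
  generalize volume (sqBall (k+1) 1) = b at *
  generalize volume (sqBall (k+1+1) 1) = c at *
  have hbn0 : b ^ (k+1+1) ≠ 0 := pow_ne_zero _ hb0
  have hbnt : b ^ (k+1+1) ≠ ⊤ := ENNReal.pow_ne_top hbt
  have hcn0 : c ^ (k+1) ≠ 0 := pow_ne_zero _ hc0
  have hcnt : c ^ (k+1) ≠ ⊤ := ENNReal.pow_ne_top hct
  have h3 : C * I * c ^ (k+1) ≤ b ^ (k+1+1) * volume L ^ (k+1) := by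
    rw [← ENNReal.mul_le_mul_iff_left hbn0 hbnt]
    calc C * I * c ^ (k+1) * b ^ (k+1+1) = (C * J) * (D * I) := by
          rw [mul_assoc, ← h2]; ring
      _ ≤ b ^ (k+1+1) * (volume L ^ (k+1) * b ^ (k+1+1)) := by
          rw [← hB]; gcongr
      _ = _ := by ring
  rw [div_eq_mul_inv, mul_right_comm, ← div_eq_mul_inv]
  exact (ENNReal.le_div_iff_mul_le (Or.inl hcn0) (Or.inl hcnt)).2 h3
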